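/- arXiv:1707.08510 — 2 statements merged into one kernel-verified Lean document; each statement's English description precedes it below -/
import Mathlib

section
/- There exists a constant C such that for every f ∈ S³, all d ∈ ℕ and every x ∈ 𝒜_d: |Ĝ_d f(x) − G̃_d f(x)| ≤ C·(Σ_{i=1}^3 ‖f^{(i)}‖_{∞,1/2})·e^{|x₁|}·d^{−1/2}. -/
/-!
The average acceptance `b(t) = E[min(1, exp(t + S))]`, with `S = Σ_{i ≥ 2} K(x_i, Y_i)`, enters `G̃_d`
through `b((log ρ)'(x₁)(Y₁ - x₁))`, while `Ĝ_d` only sees `b(0)` and the formal derivative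
`β = E[exp(S) 1{S < 0}]`. Once `|b(t) - b(0) - t β| ≤ C t²` is known with `C` independent of `d` and of
`x ∈ 𝒜_d` (`acceptance_expansion`), a Taylor expansion of `f` and of `b` (`generator_expansion`) shows
that the terms of order `l²/d` reproduce `Ĝ_d f / d`, and the remainder is a third moment of a Gaussian
of standard deviation `l/√d`; multiplying by `d` leaves the factor `d^{-1/2}`. The weight `e^{|x₁|}`
absorbs the growth `e^{|x₁|/2}` of the derivatives of `f` and that of `((log ρ)')²`.

Since `min(1, exp)` has a kink at `0`, the quadratic bound rests on the estimate `P(|S| ≤ τ) ≤ C τ`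
(`small_ball`). On `A` the polynomial `K(x, ·)` has a derivative bounded away from zero
(`Kd_lower`), and for `x ∈ 𝒜_d` a positive fraction of the coordinates lie in `A`
(`card_good_lower`). With `Φ(u) = τ arctan(u/τ)`, which is bounded by `πτ/2` and satisfies `Φ' ≥ 1/2` on
`[-τ, τ]`, and with `s_i` the sign of `(log ρ)'(x_i)`, Gaussian integration by parts (`pi_ibp`) gives
`E[Φ'(S) Σ s_i ∂K(x_i, Y_i)] = (d/l²) E[Φ(S) Σ s_i (Y_i - x_i)]`, the sums running over the `n`
indices with `x_i ∈ A`. The left-hand side is at least a constant times `n P(|S| ≤ τ)`, the right-hand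
side at most a constant times `τ √(n d)`, and `n` is comparable to `d`.
-/

open MeasureTheory ProbabilityTheory Filter Set

noncomputable section

/-- The exponentially-weighted sup-norm `‖g‖_{∞,s} = sup_x e^{-s|x|} |g x|`. -/
def normIS (g : ℝ → ℝ) (s : ℝ) : ℝ := ⨆ x : ℝ, Real.exp (-(s * |x|)) * |g x|

/-- Membership in the space `Sⁿ`: `n`-times continuously differentiable with all
iterated derivatives up to order `n` of sub-exponential growth. -/
def MemS (n : ℕ) (g : ℝ → ℝ) : Prop :=
  ContDiff ℝ n g ∧ ∀ s > (0:ℝ), ∀ i ≤ n,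
    BddAbove (Set.range fun x => Real.exp (-(s * |x|)) * |iteratedDeriv i g x|)

/-- A positive sequence is sluggish if it tends to infinity but `a d / √(log d)` stays bounded. -/
def Sluggish (a : ℕ → ℝ) : Prop :=
  (∀ d, 0 < a d) ∧ Tendsto a atTop atTop ∧
    ∃ M : ℝ, ∀ d : ℕ, 2 ≤ d → a d / Real.sqrt (Real.log d) ≤ M

/-- `(log ρ)'` -/
def dl (ρ : ℝ → ℝ) : ℝ → ℝ := deriv fun x => Real.log (ρ x)

/-- `(log ρ)''` -/
def d2l (ρ : ℝ → ℝ) : ℝ → ℝ := deriv (dl ρ)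

/-- `ρ(g) = ∫ g dρ` -/
def rhoE (ρ g : ℝ → ℝ) : ℝ := ∫ x, g x * ρ x

/-- `J = ρ(((log ρ)')²)` -/
def Jc (ρ : ℝ → ℝ) : ℝ := rhoE ρ fun x => (dl ρ x) ^ 2

/-- super-exponential tails: `(x/|x|)·(log ρ)'(x) → -∞` as `|x| → ∞`. -/
def SuperExpTails (ρ : ℝ → ℝ) : Prop :=
  Tendsto (dl ρ) atTop atBot ∧ Tendsto (dl ρ) atBot atTop

/-- standard normal CDF -/
def stdCDF (t : ℝ) : ℝ := ((gaussianReal 0 1) (Set.Iic t)).toReal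

/-- the constant `h(l) = 2l²Φ(-l√J/2)` -/
def hc (ρ : ℝ → ℝ) (l : ℝ) : ℝ := 2 * l ^ 2 * stdCDF (-(l * Real.sqrt (Jc ρ)) / 2)

/-- the limiting (Langevin) generator `G f = (h(l)/2)(f'' + (log ρ)' f')` -/
def Gop (ρ : ℝ → ℝ) (l : ℝ) (f : ℝ → ℝ) (x : ℝ) : ℝ :=
  hc ρ l / 2 * (deriv (deriv f) x + dl ρ x * deriv f x)

/-- the product measure `ρ_d` on `ℝ^d` -/
def pm (ρ : ℝ → ℝ) (d : ℕ) : Measure (Fin d → ℝ) :=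
  Measure.pi fun _ => volume.withDensity fun x => ENNReal.ofReal (ρ x)

/-- law of the proposal `Y ~ N(x, l²/d · I_d)` -/
def gaussPi (l : ℝ) (d : ℕ) (x : Fin d → ℝ) : Measure (Fin d → ℝ) :=
  Measure.pi fun i => gaussianReal (x i) ((l ^ 2 / (d:ℝ)).toNNReal)

/-- the RWM generator `G_d` -/
def Gd (ρ : ℝ → ℝ) (l : ℝ) (d : ℕ) [NeZero d] (f : ℝ → ℝ) (x : Fin d → ℝ) : ℝ :=
  (d:ℝ) * ∫ y, (f (y 0) - f (x 0)) * min 1 ((∏ i, ρ (y i)) / ∏ i, ρ (x i)) ∂(gaussPi l d x)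

/-- the set `A` associated with the constant `c_A` -/
def Aset (ρ : ℝ → ℝ) (c : ℝ) : Set ℝ :=
  {x | |d2l ρ x| < (dl ρ x) ^ 2 ∧ 1 / c < |dl ρ x| ∧ |dl ρ x| < c}

/-- indices `2,…,d` (all coordinates except the first) -/
def restIdx (d : ℕ) : Finset (Fin d) := Finset.univ.filter fun i => (i : ℕ) ≠ 0

/-- the typical sets `𝒜_d` -/
def Ad (ρ : ℝ → ℝ) (c : ℝ) (a : ℕ → ℝ) (d : ℕ) : Set (Fin d → ℝ) :=
  {x | (1 / ((d : ℝ) - 1)) * ∑ i ∈ restIdx d, Real.exp |x i| < 2 * rhoE ρ (fun t => Real.exp |t|)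
    ∧ (∫ t in Aset ρ c, ρ t) / 2 <
        (1 / ((d : ℝ) - 1)) * ∑ i ∈ restIdx d, (Aset ρ c).indicator (fun _ => (1:ℝ)) (x i)
    ∧ (1 / ((d : ℝ) - 1)) * |∑ i ∈ restIdx d, ((dl ρ (x i)) ^ 2 - Jc ρ)| <
        a d / Real.sqrt d * Real.sqrt (3 * rhoE ρ fun t => ((dl ρ t) ^ 2 - Jc ρ) ^ 2)
    ∧ (1 / ((d : ℝ) - 1)) * |∑ i ∈ restIdx d, (d2l ρ (x i) + Jc ρ)| <
        a d / Real.sqrt d * Real.sqrt (3 * rhoE ρ fun t => (d2l ρ t + Jc ρ) ^ 2)}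

/-- `K(x,y)` -/
def Kf (ρ : ℝ → ℝ) (c : ℝ) (x y : ℝ) : ℝ :=
  dl ρ x * (y - x) + d2l ρ x / 2 * (y - x) ^ 2
    + (dl ρ x) ^ 3 * (Aset ρ c).indicator (fun _ => (1:ℝ)) x / 3 * (y - x) ^ 3

/-- `Σ_{i=2}^d K(x_i, Y_i)` -/
def SK (ρ : ℝ → ℝ) (c : ℝ) (d : ℕ) (x Y : Fin d → ℝ) : ℝ :=
  ∑ i ∈ restIdx d, Kf ρ c (x i) (Y i)

/-- `β(x,y)` -/
def betaF (ρ : ℝ → ℝ) (c l : ℝ) (d : ℕ) [NeZero d] (x : Fin d → ℝ) (y : ℝ) : ℝ :=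
  ∫ Y, min 1 (Real.exp (dl ρ (x 0) * (y - x 0) + SK ρ c d x Y)) ∂(gaussPi l d x)

/-- `G̃_d` -/
def tGd (ρ : ℝ → ℝ) (c l : ℝ) (d : ℕ) [NeZero d] (f : ℝ → ℝ) (x : Fin d → ℝ) : ℝ :=
  (d:ℝ) * ∫ y, (f y - f (x 0)) * betaF ρ c l d x y
    ∂(gaussianReal (x 0) ((l ^ 2 / (d:ℝ)).toNNReal))

/-- `Ĝ_d` -/
def hGd (ρ : ℝ → ℝ) (c l : ℝ) (d : ℕ) [NeZero d] (f : ℝ → ℝ) (x : Fin d → ℝ) : ℝ :=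
  l ^ 2 / 2 * deriv (deriv f) (x 0) * (∫ Y, min 1 (Real.exp (SK ρ c d x Y)) ∂(gaussPi l d x))
    + l ^ 2 * deriv f (x 0) * dl ρ (x 0) *
      (∫ Y, (Set.Iio (0:ℝ)).indicator Real.exp (SK ρ c d x Y) ∂(gaussPi l d x))

/-- `𝒩(x,Y)` -/
def Nf (ρ : ℝ → ℝ) (l : ℝ) (d : ℕ) (x Y : Fin d → ℝ) : ℝ :=
  l ^ 2 / (2 * (d:ℝ)) * ∑ i ∈ restIdx d, d2l ρ (x i)
    + ∑ i ∈ restIdx d, dl ρ (x i) * (Y i - x i)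

/-- `Ğ_d` -/
def bGd (ρ : ℝ → ℝ) (l : ℝ) (d : ℕ) [NeZero d] (f : ℝ → ℝ) (x : Fin d → ℝ) : ℝ :=
  l ^ 2 / 2 * deriv (deriv f) (x 0) * (∫ Y, min 1 (Real.exp (Nf ρ l d x Y)) ∂(gaussPi l d x))
    + l ^ 2 * deriv f (x 0) * dl ρ (x 0) *
      (∫ Y, (Set.Iio (0:ℝ)).indicator Real.exp (Nf ρ l d x Y) ∂(gaussPi l d x))

/-! ### Pointwise estimates for the acceptance function -/

lemma acc_lip (u v : ℝ) : |min 1 (Real.exp u) - min 1 (Real.exp v)| ≤ |u - v| := by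
  wlog h : v ≤ u generalizing u v
  · rw [abs_sub_comm, abs_sub_comm u]; exact this v u (le_of_not_ge h)
  have h1 : Real.exp v ≤ Real.exp u := Real.exp_le_exp.2 h
  have h2 : min 1 (Real.exp v) ≤ min 1 (Real.exp u) := min_le_min le_rfl h1
  rw [abs_of_nonneg (by linarith), abs_of_nonneg (by linarith)]
  rcases le_total 0 v with hv | hv
  · have := Real.one_le_exp hv
    rw [min_eq_left this, min_eq_left (this.trans h1)]; linarith
  · have hv1 : Real.exp v ≤ 1 := Real.exp_le_one_iff.2 hv
    rw [min_eq_right hv1]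
    rcases le_total 0 u with hu | hu
    · have := min_le_left 1 (Real.exp u)
      have := Real.add_one_le_exp v
      linarith
    · have := min_le_right 1 (Real.exp u)
      have h3 := Real.add_one_le_exp (v - u)
      have h4 : Real.exp v = Real.exp u * Real.exp (v - u) := by rw [← Real.exp_add]; ring_nf
      have h5 : Real.exp u ≤ 1 := Real.exp_le_one_iff.2 hu
      have h6 := Real.exp_pos u
      nlinarith

/-- First-order expansion of `u ↦ min 1 (exp u)` at `s`. Away from the kink at `0` the error is
quadratic in `t`; it is only linear when `s` and `t + s` can lie on different sides of the kink,
which forces `|s| ≤ |t|`. -/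
lemma acc_taylor (s t : ℝ) :
    |min 1 (Real.exp (t + s)) - min 1 (Real.exp s) - t * (Set.Iio (0:ℝ)).indicator Real.exp s| ≤
      t ^ 2 + 2 * |t| * ({r : ℝ | |r| ≤ |t|}.indicator (fun _ => (1:ℝ)) s) := by
  by_cases hs : |s| ≤ |t|
  · have h1 := acc_lip (t + s) s
    rw [add_sub_cancel_right] at h1
    have h2 : |(Set.Iio (0:ℝ)).indicator Real.exp s| ≤ 1 := by
      by_cases h : s ∈ Set.Iio (0:ℝ)
      · rw [Set.indicator_of_mem h, abs_of_pos (Real.exp_pos s)]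
        exact Real.exp_le_one_iff.2 (le_of_lt h)
      · simp [Set.indicator_of_notMem h]
    rw [Set.indicator_of_mem (show s ∈ {r : ℝ | |r| ≤ |t|} from hs)]
    refine (abs_sub _ _).trans ?_
    rw [abs_mul]
    nlinarith [abs_nonneg t, sq_nonneg t]
  · rw [Set.indicator_of_notMem (show s ∉ {r : ℝ | |r| ≤ |t|} from hs)]
    push Not at hs
    rcases lt_or_ge s 0 with h | h
    · have hts : t + s < 0 := by
        rw [abs_of_neg h] at hs; linarith [le_abs_self t]
      rw [Set.indicator_of_mem (show s ∈ Set.Iio (0:ℝ) from h),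
        min_eq_right (Real.exp_le_one_iff.2 hts.le), min_eq_right (Real.exp_le_one_iff.2 h.le)]
      have e1 : Real.exp (t + s) - Real.exp s - t * Real.exp s
          = Real.exp s * (Real.exp t - 1 - t) := by rw [Real.exp_add]; ring
      have h0 : 0 ≤ Real.exp t - 1 - t := by linarith [Real.add_one_le_exp t]
      have hs1 : Real.exp s ≤ 1 := Real.exp_le_one_iff.2 h.le
      have hsp := Real.exp_pos s
      rw [e1, abs_of_nonneg (by positivity)]
      simp only [mul_zero, add_zero]
      by_cases ht : |t| ≤ 1
      · have := (abs_le.1 (Real.abs_exp_sub_one_sub_id_le ht)).2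
        nlinarith
      · have ht2 : |t| ≤ t ^ 2 := by
          rw [← sq_abs]; nlinarith [abs_nonneg t]
        rcases le_total 0 t with h3 | h3
        · rw [abs_of_nonneg h3] at ht ht2
          have : Real.exp s * Real.exp t ≤ 1 := by
            rw [← Real.exp_add]; exact Real.exp_le_one_iff.2 (by linarith)
          nlinarith
        · rw [abs_of_nonpos h3] at ht ht2
          have : Real.exp t ≤ 1 := Real.exp_le_one_iff.2 h3
          nlinarith
    · have hts : 0 < t + s := by
        rw [abs_of_nonneg h] at hs; linarith [neg_abs_le t]
      rw [Set.indicator_of_notMem (by simpa using h), min_eq_left (Real.one_le_exp hts.le),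
        min_eq_left (Real.one_le_exp h)]
      simp only [sub_self, mul_zero, abs_zero]; positivity

/-! ### Gaussian integration by parts -/

lemma integrable_gaussian_iff {m : ℝ} {v : NNReal} (hv : v ≠ 0) {g : ℝ → ℝ} :
    Integrable g (gaussianReal m v) ↔ Integrable (fun y => gaussianPDFReal m v y * g y) := by
  rw [gaussianReal_of_var_ne_zero m hv]
  rw [integrable_withDensity_iff_integrable_smul' (measurable_gaussianPDF m v)
    (ae_of_all _ fun _ => gaussianPDF_lt_top)]
  simp [toReal_gaussianPDF]

lemma hasDerivAt_gaussianPDFReal (m : ℝ) {v : NNReal} (hv : v ≠ 0) (y : ℝ) :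
    HasDerivAt (gaussianPDFReal m v) (-((y - m) / v) * gaussianPDFReal m v y) y := by
  have hv' : (v : ℝ) ≠ 0 := by exact_mod_cast hv
  have h1 : HasDerivAt (fun y : ℝ => -(y - m) ^ 2 / (2 * (v:ℝ))) (-((y - m) / v)) y := by
    have := ((((hasDerivAt_id y).sub_const m).pow 2).neg).div_const (2 * (v:ℝ))
    refine this.congr_deriv ?_
    simp; field_simp
  have h2 := (h1.exp).const_mul ((Real.sqrt (2 * Real.pi * v))⁻¹)
  rw [gaussianPDFReal_def]
  exact h2.congr_deriv (by ring)

/-- Gaussian integration by parts (Stein's identity) in one variable. -/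
lemma gaussian_ibp (m : ℝ) {v : NNReal} (hv : v ≠ 0) {G G' : ℝ → ℝ} {B : ℝ}
    (hG : ∀ y, HasDerivAt G (G' y) y) (hB : ∀ y, |G y| ≤ B)
    (hG' : Integrable G' (gaussianReal m v)) :
    ∫ y, G' y ∂(gaussianReal m v) = (v:ℝ)⁻¹ * ∫ y, (y - m) * G y ∂(gaussianReal m v) := by
  have hc : Continuous G := continuous_iff_continuousAt.2 fun y => (hG y).continuousAt
  have hid : Integrable (fun y : ℝ => y - m) (gaussianReal m v) := by
    have := (memLp_id_gaussianReal (μ := m) (v := v) 1).integrable le_rfl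
    exact this.sub (integrable_const m)
  have h1 : Integrable (fun y : ℝ => (y - m) * G y) (gaussianReal m v) :=
    hid.mul_bdd (c := B) hc.aestronglyMeasurable (ae_of_all _ hB)
  have h0 : Integrable G (gaussianReal m v) :=
    (integrable_const B).mono' hc.aestronglyMeasurable (ae_of_all _ hB)
  have key := integral_mul_deriv_eq_deriv_mul_of_integrable
    (u := gaussianPDFReal m v) (u' := fun y => -((y - m) / v) * gaussianPDFReal m v y)
    (v := G) (v' := G') (fun y _ => hasDerivAt_gaussianPDFReal m hv y) (fun y _ => hG y)
    ((integrable_gaussian_iff hv).1 hG')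
    ((((integrable_gaussian_iff hv).1 h1).const_mul (-(v:ℝ)⁻¹)).congr
      (ae_of_all _ fun y => by simp; ring))
    ((integrable_gaussian_iff hv).1 h0)
  rw [integral_gaussianReal_eq_integral_smul hv, integral_gaussianReal_eq_integral_smul hv]
  simp only [smul_eq_mul]
  rw [key, ← integral_neg, ← integral_const_mul]
  congr 1; ext y; ring

/-- Resampling one coordinate of a product measure independently leaves the measure unchanged. -/
lemma measurePreserving_update_pi {ι : Type*} [Fintype ι] [DecidableEq ι] (μ : ι → Measure ℝ)
    [∀ i, IsProbabilityMeasure (μ i)] (i : ι) :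
    MeasurePreserving (fun p : (ι → ℝ) × ℝ => Function.update p.1 i p.2)
      ((Measure.pi μ).prod (μ i)) (Measure.pi μ) := by
  have hm : Measurable (fun p : (ι → ℝ) × ℝ => Function.update p.1 i p.2) := by
    refine measurable_pi_lambda _ fun j => ?_
    by_cases h : j = i
    · subst h; simpa using measurable_snd
    · simp only [Function.update_of_ne h]; fun_prop
  refine ⟨hm, (Measure.pi_eq fun s hs => ?_).symm⟩
  rw [Measure.map_apply hm (MeasurableSet.univ_pi hs)]
  have : (fun p : (ι → ℝ) × ℝ => Function.update p.1 i p.2) ⁻¹' (Set.univ.pi s) =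
      (Set.univ.pi (Function.update s i Set.univ)) ×ˢ (s i) := by
    ext p
    simp only [Set.mem_preimage, Set.mem_pi, Set.mem_univ, true_imp_iff, Set.mem_prod]
    constructor
    · intro h
      refine ⟨fun j => ?_, by simpa using h i⟩
      by_cases hj : j = i
      · subst hj; simp
      · simpa [hj] using h j
    · rintro ⟨h, h'⟩ j
      by_cases hj : j = i
      · subst hj; simpa using h'
      · simpa [hj] using h j
  rw [this, Measure.prod_prod, Measure.pi_pi, ← Finset.mul_prod_erase _ _ (Finset.mem_univ i),
    ← Finset.mul_prod_erase Finset.univ (fun j => μ j (s j)) (Finset.mem_univ i)]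
  simp only [Function.update_self, measure_univ, one_mul]
  rw [mul_comm]
  congr 1
  refine Finset.prod_congr rfl fun j hj => ?_
  rw [Function.update_of_ne (Finset.ne_of_mem_erase hj)]

/-- Gaussian integration by parts in the `i`-th coordinate of a product of Gaussians. -/
lemma pi_ibp {d : ℕ} (x : Fin d → ℝ) {v : NNReal} (hv : v ≠ 0) (i : Fin d)
    {F F' : (Fin d → ℝ) → ℝ} {B : ℝ}
    (hF : ∀ Y y, HasDerivAt (fun y => F (Function.update Y i y)) (F' (Function.update Y i y)) y)
    (hFm : Measurable F) (hB : ∀ Y, |F Y| ≤ B)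
    (hF' : Integrable F' (Measure.pi fun j => gaussianReal (x j) v)) :
    ∫ Y, F' Y ∂(Measure.pi fun j => gaussianReal (x j) v) =
      (v:ℝ)⁻¹ * ∫ Y, (Y i - x i) * F Y ∂(Measure.pi fun j => gaussianReal (x j) v) := by
  set P := Measure.pi fun j => gaussianReal (x j) v with hP
  have hmp := measurePreserving_update_pi (fun j => gaussianReal (x j) v) i
  rw [← hP] at hmp
  have hid : Integrable (fun y : ℝ => y - x i) (gaussianReal (x i) v) :=
    ((memLp_id_gaussianReal (μ := x i) (v := v) 1).integrable le_rfl).sub (integrable_const _)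
  have hint2 : Integrable (fun Y : Fin d → ℝ => (Y i - x i) * F Y) P := by
    have : Integrable (fun Y : Fin d → ℝ => Y i - x i) P :=
      integrable_comp_eval (μ := fun j => gaussianReal (x j) v) (f := fun y : ℝ => y - x i) hid
    exact this.mul_bdd (c := B) hFm.aestronglyMeasurable (ae_of_all _ hB)
  have h1 : Integrable (fun p : (Fin d → ℝ) × ℝ => F' (Function.update p.1 i p.2))
      (P.prod (gaussianReal (x i) v)) := hmp.integrable_comp_of_integrable hF'
  have h2 : Integrable (fun p : (Fin d → ℝ) × ℝ => (p.2 - x i) * F (Function.update p.1 i p.2))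
      (P.prod (gaussianReal (x i) v)) := by
    have := hmp.integrable_comp_of_integrable hint2
    simpa [Function.comp_def] using this
  have e1 : ∫ Y, F' Y ∂P = ∫ p : (Fin d → ℝ) × ℝ, F' (Function.update p.1 i p.2)
      ∂(P.prod (gaussianReal (x i) v)) := by
    rw [← integral_map hmp.measurable.aemeasurable (f := F') (by
      rw [hmp.map_eq]; exact hF'.aestronglyMeasurable), hmp.map_eq]
  have e2 : ∫ Y, (Y i - x i) * F Y ∂P = ∫ p : (Fin d → ℝ) × ℝ,
      (p.2 - x i) * F (Function.update p.1 i p.2) ∂(P.prod (gaussianReal (x i) v)) := by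
    conv_lhs => rw [← hmp.map_eq]
    rw [integral_map hmp.measurable.aemeasurable (by
      rw [hmp.map_eq]; exact hint2.aestronglyMeasurable)]
    simp
  rw [e1, e2, integral_prod _ h1, integral_prod _ h2, ← integral_const_mul]
  refine integral_congr_ae ?_
  filter_upwards [h1.prod_right_ae] with Y hY
  exact gaussian_ibp (x i) hv (hF Y) (fun y => hB _) hY

/-! ### Small-ball estimate -/

/-- The derivative of `y ↦ K(x, y)`. -/
def Kd (ρ : ℝ → ℝ) (c : ℝ) (x y : ℝ) : ℝ :=
  dl ρ x + d2l ρ x * (y - x) + (dl ρ x) ^ 3 * (Aset ρ c).indicator (fun _ => (1:ℝ)) x * (y - x) ^ 2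

lemma hasDerivAt_Kf (ρ : ℝ → ℝ) (c x y : ℝ) : HasDerivAt (Kf ρ c x) (Kd ρ c x y) y := by
  have h := (hasDerivAt_id y).sub_const x
  have := ((h.const_mul (dl ρ x)).add ((h.pow 2).const_mul (d2l ρ x / 2))).add
    ((h.pow 3).const_mul ((dl ρ x) ^ 3 * (Aset ρ c).indicator (fun _ => (1:ℝ)) x / 3))
  refine this.congr_deriv ?_
  simp [Kd]; ring

/-- On `A`, with `a = (log ρ)'(x)` and `u = |a| |y - x|`, the condition `|(log ρ)''| < a²` gives
`|∂_y K(x, y)| ≥ |a| (1 - u + u²) ≥ 3|a|/4`: the cubic term of `K` makes it strictly monotone in `y`,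
in the direction of the sign of `a`. -/
lemma Kd_lower (ρ : ℝ → ℝ) {c x : ℝ} (hx : x ∈ Aset ρ c) (y : ℝ) :
    3 / 4 * (1 / c) ≤ SignType.sign (dl ρ x) * Kd ρ c x y := by
  rw [Kd, Set.indicator_of_mem hx]
  obtain ⟨h1, h2, -⟩ := hx
  have h0 : dl ρ x ≠ 0 := by
    intro h; rw [h] at h1; simp at h1; exact absurd h1 (not_lt.2 (abs_nonneg _))
  set a := dl ρ x
  set b := d2l ρ x
  set h := y - x
  have hsg : (SignType.sign a : ℝ) * a = |a| := by rw [mul_comm]; exact self_mul_sign a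
  set s : ℝ := (SignType.sign a : ℝ)
  have hs1 : |s| ≤ 1 := by
    rcases lt_or_gt_of_ne h0 with h' | h' <;> simp [s, h']
  have hapos : 0 < |a| := abs_pos.2 h0
  have e : s * (a + b * h + a ^ 3 * 1 * h ^ 2) = |a| + (s * b) * h + |a| * (|a| * |h|) ^ 2 := by
    rw [mul_pow, sq_abs, sq_abs, ← hsg]; ring
  have hb : |(s * b) * h| ≤ |a| * (|a| * |h|) := by
    rw [abs_mul, abs_mul, ← mul_assoc]
    have : |s| * |b| ≤ 1 * |b| := mul_le_mul_of_nonneg_right hs1 (abs_nonneg _)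
    rw [← sq_abs a] at h1
    refine mul_le_mul_of_nonneg_right ?_ (abs_nonneg _)
    nlinarith
  rw [e]
  have := neg_abs_le ((s * b) * h)
  have h3 : 0 ≤ |a| * (|a| * |h| - 1 / 2) ^ 2 := by positivity
  nlinarith

lemma measurable_SK (ρ : ℝ → ℝ) (c : ℝ) (d : ℕ) (x : Fin d → ℝ) : Measurable (SK ρ c d x) := by
  unfold SK Kf; fun_prop

lemma hasDerivAt_SK_update (ρ : ℝ → ℝ) (c : ℝ) {d : ℕ} (x Y : Fin d → ℝ) {i : Fin d}
    (hi : i ∈ restIdx d) (y : ℝ) :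
    HasDerivAt (fun y => SK ρ c d x (Function.update Y i y)) (Kd ρ c (x i) y) y := by
  unfold SK
  have : ∀ j ∈ restIdx d, HasDerivAt (fun y => Kf ρ c (x j) (Function.update Y i y j))
      (if j = i then Kd ρ c (x i) y else 0) y := by
    intro j _
    by_cases h : j = i
    · subst h; simpa using hasDerivAt_Kf ρ c (x j) y
    · simpa [h] using hasDerivAt_const y (Kf ρ c (x j) (Y j))
  have h2 := HasDerivAt.fun_sum this
  simpa [hi] using h2

lemma integrable_Kd (ρ : ℝ → ℝ) (c x : ℝ) (v : NNReal) :
    Integrable (Kd ρ c x) (gaussianReal x v) := by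
  have h1 : MemLp (fun y : ℝ => y - x) 2 (gaussianReal x v) :=
    (memLp_id_gaussianReal 2).sub (memLp_const x)
  have h2 := h1.integrable_sq
  have h3 := h1.integrable (by norm_num)
  exact ((integrable_const _).add (h3.const_mul _)).add (h2.const_mul _)

/-- Second moment of a signed sum of independent centred Gaussians of variance `v`. -/
lemma integral_sq_sum_le {d : ℕ} (x : Fin d → ℝ) (v : NNReal) (I : Finset (Fin d))
    (s : Fin d → ℝ) (hs : ∀ i, |s i| ≤ 1) :
    ∫ Y, (∑ i ∈ I, s i * (Y i - x i)) ^ 2 ∂(Measure.pi fun j => gaussianReal (x j) v)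
      ≤ I.card * v := by
  set P := Measure.pi fun j => gaussianReal (x j) v with hP
  set X : Fin d → ℝ → ℝ := fun i y => if i ∈ I then s i * (y - x i) else 0 with hX
  have hc : ∀ i, MemLp (fun y : ℝ => y - x i) 2 (gaussianReal (x i) v) := fun i =>
    (memLp_id_gaussianReal 2).sub (memLp_const _)
  have hmem : ∀ i, MemLp (X i) 2 (gaussianReal (x i) v) := by
    intro i
    by_cases h : i ∈ I
    · simp only [hX, h, if_true]; exact (hc i).const_mul _
    · simp [hX, h]
  have hsum : (fun Y : Fin d → ℝ => ∑ i ∈ I, s i * (Y i - x i)) =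
      ∑ i, fun Y : Fin d → ℝ => X i (Y i) := by
    ext Y; simp [hX, Finset.sum_apply]
  have hv := variance_sum_pi hmem
  rw [← hP, ← hsum] at hv
  have hmean : ∫ Y, (∑ i ∈ I, s i * (Y i - x i)) ∂P = 0 := by
    rw [integral_finsetSum]
    · refine Finset.sum_eq_zero fun i _ => ?_
      rw [integral_const_mul, hP, integral_comp_eval (μ := fun j => gaussianReal (x j) v)
        (f := fun y : ℝ => y - x i) (hc i).aestronglyMeasurable,
        integral_sub (f := fun y : ℝ => y) ((memLp_id_gaussianReal 1).integrable le_rfl)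
          (integrable_const _)]
      simp
    · intro i _
      exact (integrable_comp_eval (μ := fun j => gaussianReal (x j) v) (f := fun y : ℝ => y - x i)
        ((hc i).integrable (by norm_num))).const_mul _
  have hWm : Measurable fun Y : Fin d → ℝ => ∑ i ∈ I, s i * (Y i - x i) :=
    Finset.measurable_sum _ fun i _ => ((measurable_pi_apply i).sub_const _).const_mul _
  rw [variance_of_integral_eq_zero hWm.aemeasurable hmean] at hv
  rw [hv]
  have hle : ∀ i, Var[X i; gaussianReal (x i) v] ≤ if i ∈ I then (v:ℝ) else 0 := by
    intro i
    by_cases h : i ∈ I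
    · simp only [hX, h, if_true]
      rw [variance_const_mul, variance_sub_const (by fun_prop), variance_fun_id_gaussianReal]
      have : s i ^ 2 ≤ 1 := by rw [← sq_abs]; nlinarith [hs i, abs_nonneg (s i)]
      have := v.2
      nlinarith [show (0:ℝ) ≤ v from v.2]
    · simp only [hX, h, if_false]
      exact (variance_zero _).le
  refine (Finset.sum_le_sum fun i _ => hle i).trans ?_
  simp

open Classical in
/-- Anti-concentration of `Σ K(x_i, Y_i)`. Integrating by parts the bounded function
`τ arctan(S/τ)` of `S = Σ K(x_i, Y_i)` along the direction `sign((log ρ)'(x_i))`, over the coordinates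
with `x_i ∈ A`, gives a derivative of size at least a constant times `n` on `{|S| ≤ τ}`, whereas the
other side is at most a constant times `τ √(n / v)`. -/
lemma small_ball (ρ : ℝ → ℝ) {c : ℝ} (hc : 0 < c) {d : ℕ} (x : Fin d → ℝ) {v : NNReal}
    (hv : v ≠ 0) {w : ℝ} (hw : 0 < w)
    (hn : w ^ 2 ≤ ((restIdx d).filter fun i => x i ∈ Aset ρ c).card * (v : ℝ))
    {τ : ℝ} (hτ : 0 < τ) :
    (Measure.pi fun j => gaussianReal (x j) v).real {Y | |SK ρ c d x Y| ≤ τ} ≤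
      4 * Real.pi * c / (3 * w) * τ := by
  set P := Measure.pi fun j => gaussianReal (x j) v with hP
  set I := (restIdx d).filter fun i => x i ∈ Aset ρ c with hI
  set n : ℝ := (I.card : ℝ) with hndef
  set S := SK ρ c d x with hS
  have hSm : Measurable S := measurable_SK ρ c d x
  set s : Fin d → ℝ := fun i => (SignType.sign (dl ρ (x i)) : ℝ) with hs
  have hs1 : ∀ i, |s i| ≤ 1 := by
    intro i
    rcases lt_trichotomy (dl ρ (x i)) 0 with h' | h' | h' <;> simp [s, h']
  have hvpos : 0 < (v:ℝ) := by positivity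
  set F : (Fin d → ℝ) → ℝ := fun Y => τ * Real.arctan (S Y / τ) with hF
  set g : (Fin d → ℝ) → ℝ := fun Y => (1 + (S Y / τ) ^ 2)⁻¹ with hg
  have hgm : Measurable g := by fun_prop
  have hFm : Measurable F := (Real.measurable_arctan.comp (hSm.div_const τ)).const_mul τ
  have hFB : ∀ Y, |F Y| ≤ τ * (Real.pi / 2) := fun Y => by
    rw [hF, abs_mul, abs_of_pos hτ]
    exact mul_le_mul_of_nonneg_left (abs_le.2 ⟨(Real.neg_pi_div_two_lt_arctan _).le,
      (Real.arctan_lt_pi_div_two _).le⟩) hτ.le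
  have hg0 : ∀ Y, 0 ≤ g Y := fun Y => by positivity
  have hg1 : ∀ Y, |g Y| ≤ 1 := fun Y => by
    rw [abs_of_nonneg (hg0 Y)]; exact inv_le_one_of_one_le₀ (by nlinarith [sq_nonneg (S Y / τ)])
  have hKint : ∀ i, Integrable (fun Y : Fin d → ℝ => Kd ρ c (x i) (Y i)) P := fun i =>
    integrable_comp_eval (μ := fun j => gaussianReal (x j) v) (integrable_Kd ρ c (x i) v)
  have hgK : ∀ i, Integrable (fun Y : Fin d → ℝ => g Y * Kd ρ c (x i) (Y i)) P := fun i =>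
    (hKint i).bdd_mul (c := 1) hgm.aestronglyMeasurable (ae_of_all _ hg1)
  have hstein : ∀ i ∈ I, ∫ Y, g Y * Kd ρ c (x i) (Y i) ∂P =
      (v:ℝ)⁻¹ * ∫ Y, (Y i - x i) * F Y ∂P := by
    intro i hi
    have hi' : i ∈ restIdx d := (Finset.mem_filter.1 hi).1
    refine pi_ibp x hv i (fun Y y => ?_) hFm hFB (hgK i)
    have := (((hasDerivAt_SK_update ρ c x Y hi' y).div_const τ).arctan).const_mul τ
    refine this.congr_deriv ?_
    simp [hg, hS]; field_simp
  have hYint : ∀ i, Integrable (fun Y : Fin d → ℝ => Y i - x i) P := fun i =>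
    integrable_comp_eval (μ := fun j => gaussianReal (x j) v) (f := fun y : ℝ => y - x i)
      (((memLp_id_gaussianReal 1).integrable le_rfl).sub (integrable_const _))
  have hYF : ∀ i, Integrable (fun Y : Fin d → ℝ => (Y i - x i) * F Y) P := fun i =>
    (hYint i).mul_bdd (c := τ * (Real.pi / 2)) hFm.aestronglyMeasurable (ae_of_all _ hFB)
  have hmain : ∫ Y, g Y * ∑ i ∈ I, s i * Kd ρ c (x i) (Y i) ∂P =
      (v:ℝ)⁻¹ * ∫ Y, (∑ i ∈ I, s i * (Y i - x i)) * F Y ∂P := by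
    have e1 : ∀ Y : Fin d → ℝ, g Y * ∑ i ∈ I, s i * Kd ρ c (x i) (Y i) =
        ∑ i ∈ I, s i * (g Y * Kd ρ c (x i) (Y i)) := fun Y => by
      rw [Finset.mul_sum]; exact Finset.sum_congr rfl fun i _ => by ring
    have e2 : ∀ Y : Fin d → ℝ, (∑ i ∈ I, s i * (Y i - x i)) * F Y =
        ∑ i ∈ I, s i * ((Y i - x i) * F Y) := fun Y => by
      rw [Finset.sum_mul]; exact Finset.sum_congr rfl fun i _ => by ring
    simp_rw [e1, e2]
    rw [integral_finsetSum _ fun i _ => (hgK i).const_mul _,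
      integral_finsetSum _ fun i _ => (hYF i).const_mul _, Finset.mul_sum]
    refine Finset.sum_congr rfl fun i hi => ?_
    rw [integral_const_mul, integral_const_mul, hstein i hi]; ring
  have hms : MeasurableSet {Y | |S Y| ≤ τ} := measurableSet_le hSm.abs measurable_const
  have hlow : P.real {Y | |S Y| ≤ τ} * (n * (3 / (8 * c))) ≤
      ∫ Y, g Y * ∑ i ∈ I, s i * Kd ρ c (x i) (Y i) ∂P := by
    rw [← smul_eq_mul, ← integral_indicator_const _ hms]
    refine integral_mono ((integrable_const _).indicator hms) ?_ fun Y => ?_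
    · have : Integrable (fun Y : Fin d → ℝ => ∑ i ∈ I, s i * Kd ρ c (x i) (Y i)) P :=
        integrable_finsetSum _ fun i _ => (hKint i).const_mul _
      exact this.bdd_mul (c := 1) hgm.aestronglyMeasurable (ae_of_all _ hg1)
    · have hsum : n * (3 / 4 * (1 / c)) ≤ ∑ i ∈ I, s i * Kd ρ c (x i) (Y i) := by
        rw [hndef, ← nsmul_eq_mul]
        exact Finset.card_nsmul_le_sum _ _ _ fun i hi =>
          Kd_lower ρ (Finset.mem_filter.1 hi).2 (Y i)
      have hn0 : 0 ≤ n * (3 / 4 * (1 / c)) := by positivity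
      by_cases hY : Y ∈ {Y | |S Y| ≤ τ}
      · simp only [Set.indicator_of_mem hY]
        have hhalf : 1 / 2 ≤ g Y := by
          rw [hg, one_div]
          refine inv_anti₀ (by positivity) ?_
          have : |S Y / τ| ≤ 1 := by
            rw [abs_div, abs_of_pos hτ]; exact (div_le_one hτ).2 hY
          have : (S Y / τ) ^ 2 ≤ 1 := by rw [← sq_abs]; nlinarith [abs_nonneg (S Y / τ)]
          linarith
        calc n * (3 / (8 * c)) = 1 / 2 * (n * (3 / 4 * (1 / c))) := by field_simp; ring
          _ ≤ _ := mul_le_mul hhalf hsum hn0 (hg0 Y)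
      · simp only [Set.indicator_of_notMem hY]
        exact mul_nonneg (hg0 Y) (hn0.trans hsum)
  have hn_pos : 0 < n * v := lt_of_lt_of_le (by positivity) hn
  set q := Real.sqrt (n * v) with hq
  have hqpos : 0 < q := Real.sqrt_pos.2 hn_pos
  have hq2 : q ^ 2 = n * v := Real.sq_sqrt hn_pos.le
  have hwq : w ≤ q := Real.le_sqrt_of_sq_le hn
  have hup : ∫ Y, (∑ i ∈ I, s i * (Y i - x i)) * F Y ∂P ≤ τ * (Real.pi / 2) * q := by
    have hsq : Integrable (fun Y : Fin d → ℝ => (∑ i ∈ I, s i * (Y i - x i)) ^ 2) P := by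
      refine MemLp.integrable_sq ?_
      refine memLp_finsetSum _ fun i _ => MemLp.const_mul ?_ _
      exact MemLp.comp_measurePreserving (f := fun Y : Fin d → ℝ => Y i)
        (g := fun y : ℝ => y - x i) ((memLp_id_gaussianReal 2).sub (memLp_const _))
        (measurePreserving_eval (fun j => gaussianReal (x j) v) i)
    calc ∫ Y, (∑ i ∈ I, s i * (Y i - x i)) * F Y ∂P
        ≤ ∫ Y, τ * (Real.pi / 2) *
            ((2 * q)⁻¹ * (∑ i ∈ I, s i * (Y i - x i)) ^ 2 + q / 2) ∂P := by
          refine integral_mono ?_ (((hsq.const_mul _).add (integrable_const _)).const_mul _)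
            fun Y => ?_
          · have : Integrable (fun Y : Fin d → ℝ => ∑ i ∈ I, s i * (Y i - x i)) P :=
              integrable_finsetSum _ fun i _ => (hYint i).const_mul _
            exact this.mul_bdd (c := τ * (Real.pi / 2)) hFm.aestronglyMeasurable
              (ae_of_all _ hFB)
          · simp only
            set W := ∑ i ∈ I, s i * (Y i - x i)
            have h1 : W * F Y ≤ |W| * (τ * (Real.pi / 2)) := by
              refine (le_abs_self _).trans ?_
              rw [abs_mul]; exact mul_le_mul_of_nonneg_left (hFB Y) (abs_nonneg _)
            -- arithmetic-geometric mean inequality, optimal at `|W| = q`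
            have h2 : |W| ≤ (2 * q)⁻¹ * W ^ 2 + q / 2 := by
              have : 0 ≤ (2 * q)⁻¹ * (|W| - q) ^ 2 := by positivity
              have e : (2 * q)⁻¹ * (|W| - q) ^ 2 = (2 * q)⁻¹ * W ^ 2 + q / 2 - |W| := by
                rw [sub_sq, sq_abs]; field_simp; ring
              linarith
            have h3 : 0 ≤ τ * (Real.pi / 2) := by positivity
            nlinarith
      _ = τ * (Real.pi / 2) * ((2 * q)⁻¹ * (∫ Y, (∑ i ∈ I, s i * (Y i - x i)) ^ 2 ∂P) + q / 2) := by
          rw [integral_const_mul, integral_add (hsq.const_mul _) (integrable_const _),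
            integral_const_mul]; simp
      _ ≤ τ * (Real.pi / 2) * ((2 * q)⁻¹ * q ^ 2 + q / 2) := by
          rw [hq2]
          have := integral_sq_sum_le x v I s hs1
          gcongr
      _ = τ * (Real.pi / 2) * q := by field_simp; ring
  have hfin : P.real {Y | |S Y| ≤ τ} * (n * (3 / (8 * c))) ≤
      (v:ℝ)⁻¹ * (τ * (Real.pi / 2) * q) :=
    hlow.trans (hmain.le.trans (mul_le_mul_of_nonneg_left hup (by positivity)))
  have hp0 : 0 ≤ P.real {Y | |S Y| ≤ τ} := measureReal_nonneg
  set p := P.real {Y | |S Y| ≤ τ}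
  have h5 : p * q ^ 2 * (3 / (8 * c)) ≤ τ * (Real.pi / 2) * q := by
    have := mul_le_mul_of_nonneg_left hfin hvpos.le
    rw [mul_inv_cancel_left₀ hvpos.ne'] at this
    rw [hq2]; linarith
  have h6 : p * q * (3 / (8 * c)) ≤ τ * (Real.pi / 2) := by
    refine le_of_mul_le_mul_right ?_ hqpos
    linarith
  have h7 : p * w * (3 / (8 * c)) ≤ τ * (Real.pi / 2) := by
    refine le_trans ?_ h6
    gcongr
  have h8 : p ≤ τ * (Real.pi / 2) / (w * (3 / (8 * c))) := by
    rw [le_div_iff₀ (by positivity)]; linarith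
  refine h8.trans (le_of_eq ?_)
  field_simp; ring

/-! ### Expansion of the generator in the first coordinate -/

lemma abs_iteratedDeriv_le {n : ℕ} {f : ℝ → ℝ} (hf : MemS n f) {i : ℕ} (hi : i ≤ n) {s : ℝ}
    (hs : 0 < s) (y : ℝ) : |iteratedDeriv i f y| ≤ normIS (iteratedDeriv i f) s * Real.exp (s * |y|) := by
  have h := le_ciSup (hf.2 s hs i hi) y
  have e : |iteratedDeriv i f y| =
      Real.exp (-(s * |y|)) * |iteratedDeriv i f y| * Real.exp (s * |y|) := by
    rw [mul_right_comm, ← Real.exp_add]; simp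
  rw [e]
  exact mul_le_mul_of_nonneg_right h (Real.exp_pos _).le

lemma normIS_nonneg (g : ℝ → ℝ) (s : ℝ) : 0 ≤ normIS g s :=
  Real.iSup_nonneg fun x => by positivity

lemma taylor_third {f : ℝ → ℝ} (hf : MemS 3 f) (m y : ℝ) :
    |f y - (f m + deriv f m * (y - m) + deriv (deriv f) m / 2 * (y - m) ^ 2)| ≤
      normIS (iteratedDeriv 3 f) (1 / 2) * Real.exp (|m| / 2) *
        (|y - m| ^ 3 * Real.exp (|y - m| / 2)) := by
  rcases eq_or_ne m y with rfl | hne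
  · simp
  have hu : UniqueDiffOn ℝ (Set.uIcc m y) := uniqueDiffOn_Icc (by grind)
  have hw : ∀ k ≤ 3, ∀ z ∈ Set.uIcc m y,
      iteratedDerivWithin k f (Set.uIcc m y) z = iteratedDeriv k f z := fun k hk z hz =>
    iteratedDerivWithin_eq_iteratedDeriv hu
      ((hf.1.of_le (by exact_mod_cast hk)).contDiffAt) hz
  obtain ⟨z, hz, e⟩ := taylor_mean_remainder_lagrange (n := 2) hne
    ((hf.1.of_le (by norm_num)).contDiffOn)
    ((hf.1.contDiffOn.differentiableOn_iteratedDerivWithin (m := 2) (by norm_num) hu).mono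
      Set.uIoo_subset_uIcc_self)
  have hz' := Set.uIoo_subset_uIcc_self hz
  have hm : m ∈ Set.uIcc m y := Set.left_mem_uIcc
  rw [hw 3 le_rfl z hz'] at e
  have e2 : taylorWithinEval f 2 (Set.uIcc m y) m y =
      f m + deriv f m * (y - m) + deriv (deriv f) m / 2 * (y - m) ^ 2 := by
    rw [taylorWithinEval_succ, taylorWithinEval_succ, taylor_within_zero_eval,
      hw _ (by norm_num) m hm, hw _ (by norm_num) m hm]
    simp [iteratedDeriv_succ]
    ring
  rw [← e2, e]
  have hzb : |z| ≤ |m| + |y - m| := by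
    have h1 : |z - m| ≤ |y - m| := Set.abs_sub_left_of_mem_uIcc hz'
    have := abs_add_le m (z - m)
    rw [add_sub_cancel] at this; linarith
  have h3 := abs_iteratedDeriv_le hf le_rfl (s := 1 / 2) (by norm_num) z
  have h4 : Real.exp (1 / 2 * |z|) ≤ Real.exp (|m| / 2) * Real.exp (|y - m| / 2) := by
    rw [← Real.exp_add]; exact Real.exp_le_exp.2 (by linarith)
  have hN := normIS_nonneg (iteratedDeriv 3 f) (1 / 2)
  have h5 : |iteratedDeriv 3 f z| ≤ normIS (iteratedDeriv 3 f) (1 / 2) *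
      (Real.exp (|m| / 2) * Real.exp (|y - m| / 2)) :=
    h3.trans (mul_le_mul_of_nonneg_left h4 hN)
  rw [abs_div, abs_mul, abs_pow]
  have hfac : (1:ℝ) ≤ |(((2 + 1).factorial : ℕ) : ℝ)| := by norm_num [Nat.factorial]
  refine (div_le_self (by positivity) hfac).trans ?_
  refine (mul_le_mul_of_nonneg_right h5 (by positivity)).trans (le_of_eq ?_)
  ring

lemma integrable_cube_exp (m : ℝ) (v : NNReal) (s : ℝ) :
    Integrable (fun y => |y - m| ^ 3 * Real.exp (s * |y - m|)) (gaussianReal m v) := by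
  have h1 : Integrable (fun y => 6 * (Real.exp (-((s + 1) * m)) * Real.exp ((s + 1) * y) +
      Real.exp ((s + 1) * m) * Real.exp (-(s + 1) * y))) (gaussianReal m v) :=
    (((integrable_exp_mul_gaussianReal _).const_mul _).add
      ((integrable_exp_mul_gaussianReal _).const_mul _)).const_mul _
  refine h1.mono' (by fun_prop) (ae_of_all _ fun y => ?_)
  rw [Real.norm_of_nonneg (by positivity), ← Real.exp_add, ← Real.exp_add]
  set h := y - m with hh
  have e1 : -((s + 1) * m) + (s + 1) * y = (s + 1) * h := by rw [hh]; ring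
  have e2 : (s + 1) * m + -(s + 1) * y = (s + 1) * (-h) := by rw [hh]; ring
  rw [e1, e2]
  have h2 : |h| ^ 3 ≤ 6 * Real.exp |h| := by
    have := Real.pow_div_factorial_le_exp |h| (abs_nonneg h) 3
    norm_num [Nat.factorial] at this
    linarith
  have h3 : Real.exp |h| * Real.exp (s * |h|) ≤
      Real.exp ((s + 1) * h) + Real.exp ((s + 1) * (-h)) := by
    rw [← Real.exp_add, show |h| + s * |h| = (s + 1) * |h| by ring]
    rcases abs_choice h with h' | h' <;> rw [h'] <;>
      linarith [Real.exp_pos ((s + 1) * h), Real.exp_pos ((s + 1) * (-h))]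
  have := mul_le_mul_of_nonneg_right h2 (Real.exp_pos (s * |h|)).le
  linarith

/-- Scaling of the remainder moment: an increment of standard deviation `σ ≤ l` contributes `σ³` up to a
constant depending only on `l`. -/
lemma integral_cube_exp_le (m : ℝ) {σ l : ℝ} (hσ : 0 ≤ σ) (hσl : σ ≤ l) :
    ∫ y, |y - m| ^ 3 * Real.exp (1 / 2 * |y - m|) ∂(gaussianReal m (σ ^ 2).toNNReal) ≤
      σ ^ 3 * ∫ z, |z| ^ 3 * Real.exp (l / 2 * |z|) ∂(gaussianReal 0 1) := by
  have hmap : gaussianReal m (σ ^ 2).toNNReal = (gaussianReal 0 1).map (fun z => σ * z + m) := by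
    rw [show (fun z : ℝ => σ * z + m) = (fun z => z + m) ∘ (fun z => σ * z) from rfl,
      ← Measure.map_map (by fun_prop) (by fun_prop), gaussianReal_map_const_mul,
      gaussianReal_map_add_const]
    congr 1
    · ring
    · rw [mul_one]; ext; simp [Real.coe_toNNReal _ (sq_nonneg σ)]
  rw [hmap, integral_map (by fun_prop) (by fun_prop), ← integral_const_mul]
  have hI := integrable_cube_exp 0 1 (l / 2)
  simp only [sub_zero] at hI
  refine integral_mono_of_nonneg (ae_of_all _ fun z => by positivity) (hI.const_mul _)
    (ae_of_all _ fun z => ?_)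
  simp only [add_sub_cancel_right, abs_mul, abs_of_nonneg hσ, mul_pow]
  rw [mul_assoc]
  have : Real.exp (1 / 2 * (σ * |z|)) ≤ Real.exp (l / 2 * |z|) :=
    Real.exp_le_exp.2 (by nlinarith [abs_nonneg z])
  gcongr

/-- Taylor expansion of `E[(f(Y) - f(m)) b(L (Y - m))]` for `Y ~ N(m, v)`, when `b` is Lipschitz and has
a second-order expansion at `0` with slope `β`. The term of order one vanishes by centring, and what
remains after the terms of order `v` is controlled by a third absolute exponential moment. -/
lemma generator_expansion {f : ℝ → ℝ} (hf : MemS 3 f) (m : ℝ) (v : NNReal) {b : ℝ → ℝ}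
    (hlip : ∀ t u, |b t - b u| ≤ |t - u|) (hb1 : ∀ t, |b t| ≤ 1) {β C M L : ℝ} (hC : 0 ≤ C)
    (hM : 0 ≤ M)
    (hb : ∀ t, |b t - b 0 - t * β| ≤ C * t ^ 2) (hL : |L| ≤ M * Real.exp (|m| / 4)) :
    |∫ y, (f y - f m) * b (L * (y - m)) ∂(gaussianReal m v) -
        (deriv f m * L * β * v + deriv (deriv f) m / 2 * b 0 * v)| ≤
      (∑ i ∈ Finset.Icc 1 3, normIS (iteratedDeriv i f) (1/2)) * Real.exp |m| *
        (C * M ^ 2 + M + 1) *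
        ∫ y, |y - m| ^ 3 * Real.exp (1 / 2 * |y - m|) ∂(gaussianReal m v) := by
  set N := ∑ i ∈ Finset.Icc 1 3, normIS (iteratedDeriv i f) (1/2) with hN
  have hN0 : ∀ i, 0 ≤ normIS (iteratedDeriv i f) (1/2) := fun i => normIS_nonneg _ _
  have hNi : ∀ i ∈ Finset.Icc 1 3, normIS (iteratedDeriv i f) (1/2) ≤ N := fun i hi =>
    Finset.single_le_sum (f := fun i => normIS (iteratedDeriv i f) (1/2)) (fun j _ => hN0 j) hi
  have hNn : 0 ≤ N := Finset.sum_nonneg fun i _ => hN0 i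
  set E := Real.exp (|m| / 2) with hE
  have hE2 : E * E = Real.exp |m| := by rw [hE, ← Real.exp_add]; ring_nf
  have hE1 : 1 ≤ E := Real.one_le_exp (by positivity)
  have hder : ∀ i ∈ Finset.Icc 1 3, |iteratedDeriv i f m| ≤ N * E := fun i hi => by
    refine (abs_iteratedDeriv_le hf (Finset.mem_Icc.1 hi).2 (s := 1/2) (by norm_num) m).trans ?_
    rw [show 1 / 2 * |m| = |m| / 2 by ring]
    exact mul_le_mul_of_nonneg_right (hNi i hi) (Real.exp_pos _).le
  have hd1 : |deriv f m| ≤ N * E := by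
    simpa [iteratedDeriv_succ] using hder 1 (by simp)
  have hd2 : |deriv (deriv f) m| ≤ N * E := by
    simpa [iteratedDeriv_succ] using hder 2 (by simp)
  have hL2 : L ^ 2 ≤ M ^ 2 * E := by
    rw [← sq_abs L]
    calc |L| ^ 2 ≤ (M * Real.exp (|m| / 4)) ^ 2 := by gcongr
      _ = M ^ 2 * E := by rw [mul_pow, ← Real.exp_nat_mul, hE]; push_cast; ring_nf
  have hL1 : |L| ≤ M * E := hL.trans (by rw [hE]; gcongr; linarith [abs_nonneg m])
  set D := N * Real.exp |m| * (C * M ^ 2 + M + 1) with hD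
  set R : ℝ → ℝ := fun y => deriv f m * (y - m) * b 0 + deriv f m * L * β * (y - m) ^ 2 +
    deriv (deriv f) m / 2 * b 0 * (y - m) ^ 2 with hR
  have hpt : ∀ y, |(f y - f m) * b (L * (y - m)) - R y| ≤
      D * (|y - m| ^ 3 * Real.exp (1 / 2 * |y - m|)) := by
    intro y
    have ht := taylor_third hf m y
    set h := y - m with hh
    set Q := |h| ^ 3 * Real.exp (1 / 2 * |h|) with hQ
    have hQ3 : |h| ^ 3 ≤ Q := le_mul_of_one_le_right (by positivity)
      (Real.one_le_exp (by positivity))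
    have hQ0 : 0 ≤ Q := by positivity
    rw [show |h| / 2 = 1 / 2 * |h| by ring, ← hE, ← hQ] at ht
    have e : (f y - f m) * b (L * h) - R y =
        deriv f m * h * (b (L * h) - b 0 - (L * h) * β)
        + deriv (deriv f) m / 2 * h ^ 2 * (b (L * h) - b 0)
        + (f y - (f m + deriv f m * h + deriv (deriv f) m / 2 * h ^ 2)) * b (L * h) := by
      rw [hR]; ring
    have t1 : |deriv f m * h * (b (L * h) - b 0 - (L * h) * β)| ≤
        N * Real.exp |m| * (C * M ^ 2) * Q := by
      rw [abs_mul, abs_mul]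
      calc |deriv f m| * |h| * |b (L * h) - b 0 - (L * h) * β|
          ≤ (N * E) * |h| * (C * (L * h) ^ 2) := by
            gcongr; exact hb _
        _ = (N * E) * C * L ^ 2 * |h| ^ 3 := by rw [mul_pow, ← sq_abs h]; ring
        _ ≤ (N * E) * C * (M ^ 2 * E) * Q := by gcongr
        _ = _ := by rw [← hE2]; ring
    have t2 : |deriv (deriv f) m / 2 * h ^ 2 * (b (L * h) - b 0)| ≤
        N * Real.exp |m| * M * Q := by
      rw [abs_mul, abs_mul, abs_div, abs_two, abs_pow]
      have := hlip (L * h) 0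
      rw [sub_zero, abs_mul] at this
      calc |deriv (deriv f) m| / 2 * |h| ^ 2 * |b (L * h) - b 0|
          ≤ (N * E) * |h| ^ 2 * ((M * E) * |h|) := by
            gcongr
            · linarith [abs_nonneg (deriv (deriv f) m)]
            · exact this.trans (by gcongr)
        _ = (N * E) * (M * E) * |h| ^ 3 := by ring
        _ ≤ (N * E) * (M * E) * Q := by gcongr
        _ = _ := by rw [← hE2]; ring
    have t3 : |(f y - (f m + deriv f m * h + deriv (deriv f) m / 2 * h ^ 2)) * b (L * h)| ≤
        N * Real.exp |m| * 1 * Q := by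
      rw [abs_mul]
      calc _ ≤ (normIS (iteratedDeriv 3 f) (1 / 2) * E * Q) * 1 := by
            exact mul_le_mul ht (hb1 _) (abs_nonneg _)
              (mul_nonneg (mul_nonneg (hN0 3) (by positivity)) hQ0)
        _ ≤ (N * (E * E) * Q) * 1 := by
            have h3 := hNi 3 (by simp)
            have : E ≤ E * E := by nlinarith
            gcongr
        _ = _ := by rw [hE2]; ring
    rw [e]
    refine (abs_add_three _ _ _).trans ?_
    rw [hD]
    linarith
  set γ := gaussianReal m v with hγ
  have hQi : Integrable (fun y => |y - m| ^ 3 * Real.exp (1 / 2 * |y - m|)) γ :=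
    integrable_cube_exp m v (1 / 2)
  have hbc : Continuous b := by
    refine (LipschitzWith.of_dist_le_mul (K := 1) fun t u => ?_).continuous
    simpa [Real.dist_eq] using hlip t u
  have hfc : Continuous f := hf.1.continuous
  have hRc : Continuous R := by fun_prop
  have hmem : MemLp (fun y : ℝ => y - m) 2 γ := (memLp_id_gaussianReal 2).sub (memLp_const m)
  have i1 := hmem.integrable (by norm_num)
  have i2 := hmem.integrable_sq
  have j1 : Integrable (fun y : ℝ => deriv f m * (y - m) * b 0) γ :=
    (i1.const_mul _).mul_const _
  have j2 : Integrable (fun y : ℝ => deriv f m * L * β * (y - m) ^ 2) γ := i2.const_mul _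
  have j3 : Integrable (fun y : ℝ => deriv (deriv f) m / 2 * b 0 * (y - m) ^ 2) γ :=
    i2.const_mul _
  have hRi : Integrable R γ := (j1.add j2).add j3
  have hmean : ∫ y, (y - m) ∂γ = 0 := by
    rw [integral_sub (f := fun y : ℝ => y) ((memLp_id_gaussianReal 1).integrable le_rfl)
      (integrable_const _)]
    simp
  have hvar : ∫ y, (y - m) ^ 2 ∂γ = v := by
    have := variance_fun_id_gaussianReal (μ := m) (v := v)
    rw [variance_eq_integral (by fun_prop)] at this
    simpa using this
  have hRint : ∫ y, R y ∂γ = deriv f m * L * β * v + deriv (deriv f) m / 2 * b 0 * v := by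
    have e1 : ∫ y, R y ∂γ =
        ∫ y, (deriv f m * (y - m) * b 0 + deriv f m * L * β * (y - m) ^ 2) ∂γ +
          ∫ y, deriv (deriv f) m / 2 * b 0 * (y - m) ^ 2 ∂γ := integral_add (j1.add j2) j3
    have e2 := integral_add j1 j2
    rw [e1, e2, integral_mul_const,
      integral_const_mul, integral_const_mul, integral_const_mul, hmean, hvar]
    ring
  have hdiff : Integrable (fun y => (f y - f m) * b (L * (y - m)) - R y) γ :=
    (hQi.const_mul D).mono' (by fun_prop) (ae_of_all _ hpt)
  have hfull : Integrable (fun y => (f y - f m) * b (L * (y - m))) γ := by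
    exact (hdiff.add hRi).congr (ae_of_all _ fun y => by simp)
  rw [← hRint, ← integral_sub hfull hRi, ← integral_const_mul]
  exact norm_integral_le_of_norm_le (f := fun y => (f y - f m) * b (L * (y - m)) - R y)
    (hQi.const_mul D) (ae_of_all _ hpt)

/-! ### The averaged acceptance probability -/

/-- Averaging over `S` smooths the kink of `min 1 (exp ·)`: the linear error in the pointwise expansion
occurs with probability at most `C |t|`, so the averaged error is quadratic. -/
lemma acceptance_expansion {Ω : Type*} [MeasurableSpace Ω] (P : Measure Ω) [IsProbabilityMeasure P]
    {S : Ω → ℝ} (hS : Measurable S) {C : ℝ}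
    (hC : ∀ τ > 0, P.real {Y | |S Y| ≤ τ} ≤ C * τ) (t : ℝ) :
    |∫ Y, min 1 (Real.exp (t + S Y)) ∂P - ∫ Y, min 1 (Real.exp (0 + S Y)) ∂P -
        t * ∫ Y, (Set.Iio (0:ℝ)).indicator Real.exp (S Y) ∂P| ≤ (1 + 2 * C) * t ^ 2 := by
  rcases eq_or_ne t 0 with rfl | ht
  · simp
  have htp : 0 < |t| := abs_pos.2 ht
  have hi : ∀ t, Integrable (fun Y => min 1 (Real.exp (t + S Y))) P := fun t =>
    (integrable_const (1:ℝ)).mono' (by fun_prop) (ae_of_all _ fun Y => by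
      rw [Real.norm_of_nonneg (by positivity)]; exact min_le_left _ _)
  have hi2 : Integrable (fun Y => (Set.Iio (0:ℝ)).indicator Real.exp (S Y)) P :=
    (integrable_const (1:ℝ)).mono'
      ((Real.measurable_exp.indicator measurableSet_Iio).comp hS).aestronglyMeasurable
      (ae_of_all _ fun Y => by
        by_cases h : S Y ∈ Set.Iio (0:ℝ)
        · rw [Set.indicator_of_mem h, Real.norm_of_nonneg (Real.exp_pos _).le]
          exact Real.exp_le_one_iff.2 (le_of_lt h)
        · simp [Set.indicator_of_notMem h])
  have hms : MeasurableSet {Y | |S Y| ≤ |t|} := measurableSet_le hS.abs measurable_const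
  have hi3 : Integrable (fun Y => t ^ 2 + 2 * |t| * ({Y | |S Y| ≤ |t|}.indicator
      (fun _ => (1:ℝ)) Y)) P :=
    (integrable_const _).add (((integrable_const _).indicator hms).const_mul _)
  have key := norm_integral_le_of_norm_le
    (f := fun Y => min 1 (Real.exp (t + S Y)) - min 1 (Real.exp (0 + S Y)) -
      t * (Set.Iio (0:ℝ)).indicator Real.exp (S Y)) hi3 (ae_of_all _ fun Y => by
      have := acc_taylor (S Y) t
      rw [zero_add]
      exact this)
  rw [integral_sub (f := fun Y => min 1 (Real.exp (t + S Y)) - min 1 (Real.exp (0 + S Y)))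
    ((hi t).sub (hi 0)) (hi2.const_mul t), integral_sub (hi t) (hi 0),
    integral_const_mul, integral_add (integrable_const _)
    (((integrable_const _).indicator hms).const_mul _), integral_const_mul,
    integral_indicator_const _ hms] at key
  refine key.trans ?_
  have h1 := hC |t| htp
  have h2 : |t| * |t| = t ^ 2 := by rw [← sq, sq_abs]
  simp only [integral_const, probReal_univ, smul_eq_mul, one_mul, mul_one]
  have h3 := mul_le_mul_of_nonneg_left h1 (show 0 ≤ 2 * |t| by positivity)
  linear_combination h3 + 2 * C * h2

lemma acceptance_lipschitz {Ω : Type*} [MeasurableSpace Ω] (P : Measure Ω)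
    [IsProbabilityMeasure P] {S : Ω → ℝ} (hS : Measurable S) (t u : ℝ) :
    |∫ Y, min 1 (Real.exp (t + S Y)) ∂P - ∫ Y, min 1 (Real.exp (u + S Y)) ∂P| ≤ |t - u| := by
  have hi : ∀ t, Integrable (fun Y => min 1 (Real.exp (t + S Y))) P := fun t =>
    (integrable_const (1:ℝ)).mono' (by fun_prop) (ae_of_all _ fun Y => by
      rw [Real.norm_of_nonneg (by positivity)]; exact min_le_left _ _)
  rw [← integral_sub (hi t) (hi u)]
  have := norm_integral_le_of_norm_le
    (f := fun Y => min 1 (Real.exp (t + S Y)) - min 1 (Real.exp (u + S Y)))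
    (integrable_const (μ := P) |t - u|) (ae_of_all _ fun Y => by
      have := acc_lip (t + S Y) (u + S Y)
      rwa [add_sub_add_right_eq_sub] at this)
  simpa using this

lemma acceptance_abs_le_one {Ω : Type*} [MeasurableSpace Ω] (P : Measure Ω)
    [IsProbabilityMeasure P] {S : Ω → ℝ} (t : ℝ) :
    |∫ Y, min 1 (Real.exp (t + S Y)) ∂P| ≤ 1 := by
  have := norm_integral_le_of_norm_le (f := fun Y => min 1 (Real.exp (t + S Y)))
    (integrable_const (μ := P) (1:ℝ)) (ae_of_all _ fun Y => by
      rw [Real.norm_of_nonneg (by positivity)]; exact min_le_left _ _)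
  simpa using this

open Classical in
/-- The second condition defining `𝒜_d` forces a positive fraction of the coordinates to lie in `A`. -/
lemma card_good_lower {ρ : ℝ → ℝ} {c : ℝ} {a : ℕ → ℝ} {d : ℕ} (hd0 : d ≠ 0)
    (hA : 0 < ∫ x in Aset ρ c, ρ x) {x : Fin d → ℝ} (hx : x ∈ Ad ρ c a d) :
    (d:ℝ) * (∫ x in Aset ρ c, ρ x) / 4 ≤
      ((restIdx d).filter fun i => x i ∈ Aset ρ c).card := by
  have h := hx.2.1
  have e : ∑ i ∈ restIdx d, (Aset ρ c).indicator (fun _ => (1:ℝ)) (x i) =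
      ((restIdx d).filter fun i => x i ∈ Aset ρ c).card := by
    simp [Set.indicator_apply]
  rw [e] at h
  -- for `d = 1` the factor `1 / (d - 1)` is zero and the second condition fails
  have hd2 : 2 ≤ d := by
    by_contra hlt
    have : d = 1 := by omega
    subst this
    simp at h
    linarith
  have hd2' : (2:ℝ) ≤ d := by exact_mod_cast hd2
  rw [one_div, inv_mul_eq_div, lt_div_iff₀ (by linarith)] at h
  nlinarith

/-- **Proposition.** There is a constant `C` with
`|Ĝ_d f(x) - G̃_d f(x)| ≤ C (Σ_{i=1}^3 ‖f⁽ⁱ⁾‖_{∞,1/2}) e^{|x₁|} d^{-1/2}` for every `f ∈ S³`,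
all `d ∈ ℕ` and every `x ∈ 𝒜_d`. -/
theorem stmt6 (ρ : ℝ → ℝ) (hmeas : Measurable ρ) (hpos : ∀ x, 0 < ρ x)
    (hint : ∫ x, ρ x = 1) (hlog : MemS 4 fun x => Real.log (ρ x))
    (htail : SuperExpTails ρ) (l : ℝ) (hl : 0 < l)
    (c : ℝ) (hc : 0 < c) (hA : 0 < ∫ x in Aset ρ c, ρ x)
    (a : ℕ → ℝ) (ha : Sluggish a) :
    ∃ C : ℝ, ∀ (d : ℕ) [NeZero d], ∀ f : ℝ → ℝ, MemS 3 f → ∀ x ∈ Ad ρ c a d,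
      |hGd ρ c l d f x - tGd ρ c l d f x| ≤
        C * (∑ i ∈ Finset.Icc 1 3, normIS (iteratedDeriv i f) (1/2)) *
          Real.exp |x 0| / Real.sqrt d := by
  obtain ⟨M, hM0, hM⟩ : ∃ M : ℝ, 0 ≤ M ∧ ∀ y, |dl ρ y| ≤ M * Real.exp (|y| / 4) := by
    refine ⟨normIS (iteratedDeriv 1 fun x => Real.log (ρ x)) (1 / 4), normIS_nonneg _ _,
      fun y => ?_⟩
    have := abs_iteratedDeriv_le hlog (i := 1) (by norm_num) (s := 1 / 4) (by norm_num) y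
    rw [show 1 / 4 * |y| = |y| / 4 by ring] at this
    simpa [iteratedDeriv_one, dl] using this
  set p := ∫ x in Aset ρ c, ρ x with hp
  set w := l * Real.sqrt p / 2 with hw
  have hw0 : 0 < w := by have := Real.sqrt_pos.2 hA; positivity
  have hw2 : w ^ 2 = l ^ 2 * p / 4 := by
    rw [hw, div_pow, mul_pow, Real.sq_sqrt hA.le]; norm_num
  set C0 := 4 * Real.pi * c / (3 * w) with hC0
  have hC0p : 0 < C0 := by positivity
  set M3 := ∫ z, |z| ^ 3 * Real.exp (l / 2 * |z|) ∂(gaussianReal 0 1) with hM3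
  refine ⟨((1 + 2 * C0) * M ^ 2 + M + 1) * l ^ 3 * M3, fun d _ f hf x hx => ?_⟩
  have hd0 : d ≠ 0 := NeZero.ne d
  have hdpos : (0:ℝ) < d := by exact_mod_cast Nat.pos_of_ne_zero hd0
  have hd1 : (1:ℝ) ≤ d := by exact_mod_cast Nat.one_le_iff_ne_zero.2 hd0
  set v := (l ^ 2 / (d:ℝ)).toNNReal with hv
  have hvr : (v : ℝ) = l ^ 2 / d := Real.coe_toNNReal _ (by positivity)
  have hv0 : v ≠ 0 := (Real.toNNReal_pos.2 (by positivity)).ne'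
  have hn := card_good_lower hd0 hA hx
  rw [← hp] at hn
  classical
  have hnv : w ^ 2 ≤ ((restIdx d).filter fun i => x i ∈ Aset ρ c).card * (v:ℝ) := by
    rw [hw2, hvr]
    calc l ^ 2 * p / 4 = (d * p / 4) * (l ^ 2 / d) := by field_simp
      _ ≤ _ := by gcongr
  set P := gaussPi l d x with hP
  have hPP : P = Measure.pi fun j => gaussianReal (x j) v := rfl
  have : IsProbabilityMeasure P := by rw [hPP]; infer_instance
  have hSm := measurable_SK ρ c d x
  have hsb : ∀ τ > 0, P.real {Y | |SK ρ c d x Y| ≤ τ} ≤ C0 * τ := fun τ hτ =>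
    small_ball ρ hc x hv0 hw0 hnv hτ
  have hgen := generator_expansion hf (x 0) v
    (b := fun t => ∫ Y, min 1 (Real.exp (t + SK ρ c d x Y)) ∂P)
    (fun t u => acceptance_lipschitz P hSm t u) (fun t => acceptance_abs_le_one P t)
    (by positivity) hM0 (fun t => acceptance_expansion P hSm hsb t) (hM (x 0))
  have hσ : (l / Real.sqrt d) ^ 2 = l ^ 2 / d := by
    rw [div_pow, Real.sq_sqrt hdpos.le]
  have hcube := integral_cube_exp_le (x 0) (σ := l / Real.sqrt d) (l := l) (by positivity)
    (div_le_self hl.le (Real.one_le_sqrt.2 hd1))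
  rw [hσ, ← hv, ← hM3] at hcube
  set N := ∑ i ∈ Finset.Icc 1 3, normIS (iteratedDeriv i f) (1/2) with hN
  have hN0 : 0 ≤ N := Finset.sum_nonneg fun i _ => normIS_nonneg _ _
  have hgen2 := hgen.trans (mul_le_mul_of_nonneg_left hcube (by positivity))
  have hgen3 := mul_le_mul_of_nonneg_left hgen2 hdpos.le
  rw [← abs_of_pos hdpos, ← abs_mul, abs_of_pos hdpos, ← abs_neg] at hgen3
  have hleft : hGd ρ c l d f x - tGd ρ c l d f x = -((d:ℝ) *
      (∫ y, (f y - f (x 0)) *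
          ∫ Y, min 1 (Real.exp (dl ρ (x 0) * (y - x 0) + SK ρ c d x Y)) ∂P
          ∂(gaussianReal (x 0) v) -
        (deriv f (x 0) * dl ρ (x 0) *
            (∫ Y, (Set.Iio (0:ℝ)).indicator Real.exp (SK ρ c d x Y) ∂P) * v +
          deriv (deriv f) (x 0) / 2 *
            (∫ Y, min 1 (Real.exp (0 + SK ρ c d x Y)) ∂P) * v))) := by
    simp only [hGd, tGd, betaF, ← hP, ← hv, hvr, zero_add]
    field_simp
    ring
  rw [hleft]
  refine hgen3.trans (le_of_eq ?_)
  have hs0 : Real.sqrt d ≠ 0 := (Real.sqrt_pos.2 hdpos).ne'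
  have hs3 : (d:ℝ) * (l / Real.sqrt d) ^ 3 = l ^ 3 / Real.sqrt d := by
    have h2 := Real.mul_self_sqrt hdpos.le
    rw [div_pow, ← mul_div_assoc, div_eq_div_iff (pow_ne_zero 3 hs0) hs0]
    linear_combination (-(l ^ 3 * Real.sqrt d)) * h2
  calc _ = N * Real.exp |x 0| * ((1 + 2 * C0) * M ^ 2 + M + 1) * M3 *
        ((d:ℝ) * (l / Real.sqrt d) ^ 3) := by ring
    _ = _ := by rw [hs3]; ring
end
end

section
/- There exists a constant C such that for every f ∈ S³, all d ∈ ℕ and every x ∈ 𝒜_d: |Ğ_d f(x) − Ĝ_d f(x)| ≤ C·(Σ_{i=1}^2 ‖f^{(i)}‖_{∞,1/2})·e^{|x₁|}·d^{−1/2}. -/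
/-!
Write `Y_i = x_i + σ W_i` with `σ = l/√d` and `W` standard normal.  Then `𝒩(x,Y) = m + L(W)` with
`L` linear, and `Σ K(x_i,Y_i) = 𝒩(x,Y) + D(W)` where
`D(W) = Σ p_i (W_i² - 1) + r_i W_i³`, `p_i = σ² (log ρ)''(x_i) / 2`, `r_i = O(σ³)`.
The summands of `D` are independent and centred, so `E D² ≤ K Σ (p_i² + r_i²) = O(1/d)` on the
typical set (`Df_moment`, `core_bound`).  Since `t ↦ min 1 (exp t)` is 1-Lipschitz, this settles
the second-order term.

The function `t ↦ exp t · 1_{t<0}` is Lipschitz except for a jump at `0`, so for the first-order term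
one also needs `P(|N| ≤ |D|) = O(d^{-1/2})` for `N = m + L(W)`, at the exact rate.  With
`R = √(D² + ε²)` and `ε = d^{-1/2}`, the bump `Q = 1/(1 + (N/R)²)` dominates half of
`1_{|N| ≤ |D|}` (`indicator_exp_sub_le`), and `Q = ∂F/∂N` for `F = R · arctan(N/R)`, which is
bounded by `2R`.  Gaussian integration by parts in every coordinate (`stein_pi`) gives, with
`L = Σ α_i W_i`,
`(Σ α_i²) E Q = E[L F] - Σ α_i E[(∂F/∂D) ∂_i D]`.
Here `|∂F/∂D| ≤ 3`, so the right side is `O(d^{-1/2})` (`Qf_bound`), while `Σ α_i²` is bounded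
below because a positive proportion of the `x_i` lies in `A`, where `|(log ρ)'| > 1/c`
(`sum_sq_ge`).
-/

open MeasureTheory ProbabilityTheory Filter Set

noncomputable section

/-! ### Gaussian integration by parts -/

/-- Stein's identity on the line. -/
lemma stein_one {f f' : ℝ → ℝ} (hf : ∀ s, HasDerivAt f (f' s) s)
    (h0 : Integrable f (gaussianReal 0 1))
    (h1 : Integrable (fun s => s * f s) (gaussianReal 0 1))
    (h2 : Integrable f' (gaussianReal 0 1)) :
    ∫ s, s * f s ∂(gaussianReal 0 1) = ∫ s, f' s ∂(gaussianReal 0 1) := by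
  have hdens : ∀ s : ℝ, HasDerivAt (gaussianPDFReal 0 1) (-s * gaussianPDFReal 0 1 s) s := by
    intro s
    have e : gaussianPDFReal 0 1 = fun x : ℝ => (√(2 * Real.pi))⁻¹ * Real.exp (-x ^ 2 / 2) := by
      funext x; simp [gaussianPDFReal]
    rw [e]
    have := ((((hasDerivAt_id s).pow 2).neg.div_const 2).exp).const_mul ((√(2 * Real.pi))⁻¹)
    refine this.congr_deriv ?_
    simp
    ring
  have conv : ∀ g : ℝ → ℝ, Integrable g (gaussianReal 0 1) →
      Integrable (fun s => gaussianPDFReal 0 1 s * g s) := by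
    intro g hg
    rw [gaussianReal_of_var_ne_zero 0 one_ne_zero] at hg
    rw [integrable_withDensity_iff_integrable_smul₀' (by fun_prop) (by simp [gaussianPDF])] at hg
    simpa [toReal_gaussianPDF] using hg
  rw [integral_gaussianReal_eq_integral_smul one_ne_zero,
    integral_gaussianReal_eq_integral_smul one_ne_zero]
  have := integral_mul_deriv_eq_deriv_mul_of_integrable (u := f) (u' := f')
    (v := gaussianPDFReal 0 1) (v' := fun s => -s * gaussianPDFReal 0 1 s)
    (fun s _ => hf s) (fun s _ => hdens s)
    (by simpa [Pi.mul_def, mul_comm, mul_left_comm, mul_assoc] using (conv _ h1).neg)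
    (by simpa [Pi.mul_def, mul_comm] using conv _ h2)
    (by simpa [Pi.mul_def, mul_comm] using conv _ h0)
  have e1 : ∀ s, gaussianPDFReal 0 1 s • (s * f s) = -(f s * (-s * gaussianPDFReal 0 1 s)) := by
    intro s; simp; ring
  simp_rw [e1, integral_neg, this]
  simp [mul_comm]

/-- The standard Gaussian measure on `ι → ℝ`, as a product measure. -/
abbrev gpi (ι : Type*) [Fintype ι] : Measure (ι → ℝ) := Measure.pi fun _ => gaussianReal 0 1

/-- Replacing coordinate `i` by an independent standard normal preserves the law. -/
lemma resample {ι : Type*} [Fintype ι] [DecidableEq ι] (i : ι) :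
    MeasurePreserving (fun p : (ι → ℝ) × ℝ => Function.update p.1 i p.2)
      ((gpi ι).prod (gaussianReal 0 1)) (gpi ι) := by
  have hm : Measurable (fun p : (ι → ℝ) × ℝ => Function.update p.1 i p.2) := by
    rw [measurable_pi_iff]
    intro j
    by_cases h : j = i
    · subst h; simpa using measurable_snd
    · simp only [Function.update_of_ne h]; fun_prop
  refine ⟨hm, ?_⟩
  symm
  refine Measure.pi_eq fun S hS => ?_
  rw [Measure.map_apply hm (MeasurableSet.univ_pi hS)]
  have : (fun p : (ι → ℝ) × ℝ => Function.update p.1 i p.2) ⁻¹' (univ.pi S)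
      = (univ.pi (Function.update S i univ)) ×ˢ S i := by
    ext ⟨t, s⟩
    simp only [mem_preimage, mem_univ_pi, mem_prod]
    constructor
    · intro h
      refine ⟨fun j => ?_, by simpa using h i⟩
      by_cases hj : j = i
      · subst hj; simp
      · simpa [Function.update_of_ne hj] using h j
    · rintro ⟨h, h'⟩ j
      by_cases hj : j = i
      · subst hj; simpa
      · simpa [Function.update_of_ne hj] using h j
  rw [this, Measure.prod_prod, Measure.pi_pi, ← Finset.prod_erase_mul _ _ (Finset.mem_univ i),
    ← Finset.prod_erase_mul (a := i) _ (fun j => gaussianReal 0 1 (S j)) (Finset.mem_univ i)]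
  simp only [Function.update_self, measure_univ, mul_one]
  congr 1
  refine Finset.prod_congr rfl fun j hj => ?_
  rw [Function.update_of_ne (Finset.ne_of_mem_erase hj)]

/-- Stein's identity in coordinate `i`, where `F'` is the `i`-th partial derivative of `F`. -/
lemma stein_pi {ι : Type*} [Fintype ι] [DecidableEq ι] (i : ι) {F F' : (ι → ℝ) → ℝ}
    (hF : ∀ t s, HasDerivAt (fun s => F (Function.update t i s)) (F' (Function.update t i s)) s)
    (h0 : Integrable F (gpi ι)) (h1 : Integrable (fun t => t i * F t) (gpi ι))
    (h2 : Integrable F' (gpi ι)) :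
    ∫ t, t i * F t ∂(gpi ι) = ∫ t, F' t ∂(gpi ι) := by
  have hp := resample i
  have key : ∀ G : (ι → ℝ) → ℝ, Integrable G (gpi ι) →
      Integrable (fun p : (ι → ℝ) × ℝ => G (Function.update p.1 i p.2))
        ((gpi ι).prod (gaussianReal 0 1)) ∧
      ∫ t, G t ∂(gpi ι) = ∫ t, ∫ s, G (Function.update t i s) ∂(gaussianReal 0 1) ∂(gpi ι) := by
    intro G hG
    have h := hp.integrable_comp_of_integrable hG
    refine ⟨h, ?_⟩
    rw [← hp.map_eq, integral_map hp.measurable.aemeasurable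
      (by rw [hp.map_eq]; exact hG.aestronglyMeasurable), hp.map_eq]
    exact integral_prod _ h
  rw [(key _ h1).2, (key _ h2).2]
  refine integral_congr_ae ?_
  filter_upwards [(key _ h0).1.prod_right_ae, (key _ h1).1.prod_right_ae,
    (key _ h2).1.prod_right_ae] with t a0 a1 a2
  simp only [Function.update_self] at a1 ⊢
  exact stein_one (fun s => hF t s) a0 a1 a2
/-! ### Moments of one summand of the perturbation -/

lemma integrable_pow_gauss (n : ℕ) : Integrable (fun t : ℝ => t ^ n) (gaussianReal 0 1) := by
  have h := (memLp_id_gaussianReal' (μ := 0) (v := 1) (n : ENNReal) (by simp)).integrable_norm_pow'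
  refine h.mono' (by fun_prop) (ae_of_all _ fun t => ?_)
  simp

/-- `q(t) = p (t² - 1) + r t³`, a centred function of a standard normal variable. -/
def qf (p r t : ℝ) : ℝ := p * (t ^ 2 - 1) + r * t ^ 3

lemma continuous_qf (p r : ℝ) : Continuous (qf p r) := by unfold qf; fun_prop

lemma integral_sq_gauss : ∫ t, t ^ 2 ∂(gaussianReal 0 1) = 1 := by
  have h := variance_id_gaussianReal (μ := 0) (v := 1)
  rw [variance_eq_integral (by fun_prop)] at h
  simpa using h

lemma integral_cube_gauss : ∫ t, t ^ 3 ∂(gaussianReal 0 1) = 0 := by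
  have h := gaussianReal_map_neg (μ := 0) (v := 1)
  have h2 : ∫ t, t ^ 3 ∂(gaussianReal 0 1) = ∫ t, (-t) ^ 3 ∂(gaussianReal 0 1) := by
    conv_lhs => rw [← neg_zero, ← h]
    rw [integral_map (by fun_prop) (by fun_prop)]
  have h3 : ∀ t : ℝ, (-t) ^ 3 = - t ^ 3 := fun t => by ring
  simp_rw [h3, integral_neg] at h2
  linarith

lemma integral_qf (p r : ℝ) : ∫ t, qf p r t ∂(gaussianReal 0 1) = 0 := by
  unfold qf
  have e : ∀ t : ℝ, p * (t ^ 2 - 1) + r * t ^ 3 = p * t ^ 2 - p * 1 + r * t ^ 3 := fun t => by ring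
  simp_rw [e]
  have i := fun n (k : ℝ) => (integrable_pow_gauss n).const_mul k
  have h12 : Integrable (fun t : ℝ => p * t ^ 2 - p * 1) (gaussianReal 0 1) :=
    (i 2 p).sub (integrable_const (p * 1))
  rw [integral_add h12 (i 3 r),
    integral_sub (i 2 p) (integrable_const (p * 1)), integral_const_mul (μ := gaussianReal 0 1) p (fun t => t ^ 2),
    integral_const_mul r, integral_sq_gauss, integral_cube_gauss]
  simp

lemma memLp_qf (p r : ℝ) : MemLp (qf p r) 2 (gaussianReal 0 1) := by
  rw [memLp_two_iff_integrable_sq (continuous_qf p r).aestronglyMeasurable]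
  have e : ∀ t, qf p r t ^ 2 = p ^ 2 * t ^ 4 - 2 * p ^ 2 * t ^ 2 + p ^ 2 * t ^ 0
      + 2 * p * r * t ^ 5 - 2 * p * r * t ^ 3 + r ^ 2 * t ^ 6 := fun t => by unfold qf; ring
  simp_rw [e]
  have i := fun n (k : ℝ) => (integrable_pow_gauss n).const_mul k
  exact (((((i 4 _).sub (i 2 _)).add (i 0 _)).add (i 5 _)).sub (i 3 _)).add (i 6 _)

/-- An absolute constant with `E q(W)² ≤ KG (p² + r²)` for `W` standard normal. -/
def KG : ℝ := 2 * ∫ t, t ^ 4 + 1 + t ^ 6 ∂(gaussianReal 0 1)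

lemma KG_nonneg : 0 ≤ KG := mul_nonneg (by norm_num) (integral_nonneg fun t => by positivity)

lemma integral_qf_sq (p r : ℝ) : ∫ t, qf p r t ^ 2 ∂(gaussianReal 0 1) ≤ KG * (p ^ 2 + r ^ 2) := by
  have i := integrable_pow_gauss
  have hi : Integrable (fun t : ℝ => t ^ 4 + 1 + t ^ 6) (gaussianReal 0 1) :=
    ((i 4).add (integrable_const 1)).add (i 6)
  calc _ ≤ ∫ t, (2 * (p ^ 2 + r ^ 2)) * (t ^ 4 + 1 + t ^ 6) ∂(gaussianReal 0 1) := by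
        refine integral_mono (memLp_qf p r).integrable_sq (hi.const_mul _) fun t => ?_
        have h1 : qf p r t ^ 2 ≤ 2 * (p * (t ^ 2 - 1)) ^ 2 + 2 * (r * t ^ 3) ^ 2 := by
          unfold qf; nlinarith [sq_nonneg (p * (t ^ 2 - 1) - r * t ^ 3)]
        refine h1.trans ?_
        have : 0 ≤ p ^ 2 * (2 * t ^ 2 + t ^ 6) := by positivity
        have : 0 ≤ r ^ 2 * (t ^ 4 + 1) := by positivity
        nlinarith
    _ = _ := by rw [integral_const_mul]; unfold KG; ring

/-! ### Pointwise estimates -/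

/-- Along a curve with `n = N` and `δ = D`, the derivative of `F = R arctan(N/R)`,
`R = √(D² + ε²)`: the coefficient of `n'` is `1/(1 + (N/R)²)`. -/
lemma hasDerivAt_trunc {n δ : ℝ → ℝ} {n' δ' s ε : ℝ} (hε : 0 < ε) (hn : HasDerivAt n n' s)
    (hδ : HasDerivAt δ δ' s) :
    HasDerivAt (fun s => √(δ s ^ 2 + ε ^ 2) * Real.arctan (n s / √(δ s ^ 2 + ε ^ 2)))
      (n' * (1 / (1 + (n s / √(δ s ^ 2 + ε ^ 2)) ^ 2)) +
        (Real.arctan (n s / √(δ s ^ 2 + ε ^ 2)) -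
          (n s / √(δ s ^ 2 + ε ^ 2)) * (1 / (1 + (n s / √(δ s ^ 2 + ε ^ 2)) ^ 2))) *
        (δ s / √(δ s ^ 2 + ε ^ 2)) * δ') s := by
  have hpos : 0 < δ s ^ 2 + ε ^ 2 := by positivity
  have hR : HasDerivAt (fun s => √(δ s ^ 2 + ε ^ 2)) (δ s / √(δ s ^ 2 + ε ^ 2) * δ') s := by
    have := ((hδ.pow 2).add_const (ε ^ 2)).sqrt hpos.ne'
    refine this.congr_deriv ?_
    have : √(δ s ^ 2 + ε ^ 2) ≠ 0 := (Real.sqrt_pos.2 hpos).ne'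
    simp only [Pi.pow_apply]
    field_simp
    try push_cast
    try ring
  have hR0 : √(δ s ^ 2 + ε ^ 2) ≠ 0 := (Real.sqrt_pos.2 hpos).ne'
  have := hR.mul ((hn.div hR hR0).arctan)
  refine this.congr_deriv ?_
  simp only [Pi.div_apply]
  generalize √(δ s ^ 2 + ε ^ 2) = R at hR0 ⊢
  have h1 : 1 + (n s / R) ^ 2 ≠ 0 := by positivity
  have h2 : R ^ 2 + n s ^ 2 ≠ 0 := by positivity
  field_simp
  ring

/-- The coefficient of `δ'` in `hasDerivAt_trunc` is at most `3`. -/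
lemma trunc_coef_le {ν R δ : ℝ} (hR : 0 < R) (hδ : |δ| ≤ R) :
    |(Real.arctan ν - ν * (1 / (1 + ν ^ 2))) * (δ / R)| ≤ 3 := by
  rw [abs_mul]
  have h1 : |δ / R| ≤ 1 := by rw [abs_div, abs_of_pos hR]; exact div_le_one_of_le₀ hδ hR.le
  have h2 : |Real.arctan ν| ≤ 2 := by
    rw [abs_le]
    constructor <;> nlinarith [Real.neg_pi_div_two_lt_arctan ν, Real.arctan_lt_pi_div_two ν,
      Real.pi_lt_four]
  have h3 : |ν * (1 / (1 + ν ^ 2))| ≤ 1 := by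
    rw [mul_one_div, abs_div, abs_of_pos (by positivity : 0 < 1 + ν ^ 2)]
    refine div_le_one_of_le₀ ?_ (by positivity)
    rw [abs_le]; constructor <;> nlinarith [sq_nonneg (ν - 1), sq_nonneg (ν + 1)]
  have h4 := abs_sub (Real.arctan ν) (ν * (1 / (1 + ν ^ 2)))
  calc _ ≤ 3 * 1 := mul_le_mul (by linarith) h1 (abs_nonneg _) (by norm_num)
    _ = 3 := by norm_num

lemma exp_sub_le_of_nonpos {a b : ℝ} (hab : a ≤ b) (hb : b ≤ 0) :
    Real.exp b - Real.exp a ≤ b - a := by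
  have h1 : Real.exp a = Real.exp b * Real.exp (a - b) := by rw [← Real.exp_add]; ring_nf
  have h2 := Real.add_one_le_exp (a - b)
  have h3 : Real.exp b ≤ 1 := Real.exp_le_one_iff.2 hb
  have h4 := Real.exp_pos b
  rw [h1]
  nlinarith

lemma abs_exp_sub_le {a b : ℝ} (ha : a ≤ 0) (hb : b ≤ 0) :
    |Real.exp a - Real.exp b| ≤ |a - b| := by
  rcases le_total a b with h | h
  · rw [abs_sub_comm, abs_sub_comm a, abs_of_nonneg (sub_nonneg.2 (Real.exp_le_exp.2 h)),
      abs_of_nonneg (sub_nonneg.2 h)]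
    exact exp_sub_le_of_nonpos h hb
  · rw [abs_of_nonneg (sub_nonneg.2 (Real.exp_le_exp.2 h)), abs_of_nonneg (sub_nonneg.2 h)]
    exact exp_sub_le_of_nonpos h ha

lemma min_exp_sub_le (n δ : ℝ) :
    |min 1 (Real.exp n) - min 1 (Real.exp (n + δ))| ≤ |δ| := by
  have e : ∀ a, min 1 (Real.exp a) = Real.exp (min 0 a) := fun a => by
    rw [← Real.exp_zero]; exact (Real.exp_monotone.map_min).symm
  rw [e, e]
  refine (abs_exp_sub_le (min_le_left _ _) (min_le_left _ _)).trans ?_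
  have := abs_min_sub_min_le_max 0 n 0 (n + δ)
  simpa using this

/-- The jump of `exp · 1_{(-∞,0)}` at `0` is only felt if `|n| ≤ |δ|`, and there the second term on
the right is at least `1`. -/
lemma indicator_exp_sub_le (n δ ε : ℝ) (hε : 0 < ε) :
    |(Iio (0:ℝ)).indicator Real.exp n - (Iio (0:ℝ)).indicator Real.exp (n + δ)| ≤
      |δ| + 2 * (1 / (1 + (n / √(δ ^ 2 + ε ^ 2)) ^ 2)) := by
  have hpos : 0 < δ ^ 2 + ε ^ 2 := by positivity
  have hb : ∀ m, 0 ≤ (Iio (0:ℝ)).indicator Real.exp m ∧ (Iio (0:ℝ)).indicator Real.exp m ≤ 1 := by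
    intro m
    by_cases h : m < 0
    · rw [indicator_of_mem (mem_Iio.2 h)]
      exact ⟨(Real.exp_pos m).le, Real.exp_le_one_iff.2 h.le⟩
    · rw [indicator_of_notMem (by simpa using h)]; simp
  have hq : 0 ≤ 2 * (1 / (1 + (n / √(δ ^ 2 + ε ^ 2)) ^ 2)) := by positivity
  rcases le_or_gt |n| |δ| with h | h
  · have h1 : (n / √(δ ^ 2 + ε ^ 2)) ^ 2 ≤ 1 := by
      rw [div_pow, Real.sq_sqrt hpos.le]
      refine div_le_one_of_le₀ ?_ hpos.le
      nlinarith [sq_le_sq.2 h, sq_nonneg ε]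
    have h2 : 1 / 2 ≤ 1 / (1 + (n / √(δ ^ 2 + ε ^ 2)) ^ 2) :=
      one_div_le_one_div_of_le (by positivity) (by linarith)
    have := abs_nonneg δ
    refine le_trans (b := 1) ?_ (by linarith)
    rw [abs_le]; constructor <;> linarith [(hb n).1, (hb n).2, (hb (n + δ)).1, (hb (n + δ)).2]
  · refine le_trans ?_ (le_add_of_nonneg_right hq)
    rcases lt_or_ge n 0 with hn | hn
    · have : n + δ < 0 := by rw [abs_of_neg hn] at h; linarith [le_abs_self δ]
      rw [indicator_of_mem (mem_Iio.2 hn), indicator_of_mem (mem_Iio.2 this)]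
      simpa using abs_exp_sub_le hn.le this.le
    · have : 0 ≤ n + δ := by rw [abs_of_nonneg hn] at h; linarith [neg_abs_le δ]
      rw [indicator_of_notMem (by simpa using hn), indicator_of_notMem (by simpa using this)]
      simp

/-! ### Concentration of the perturbed linear form -/

section core
variable {ι : Type*} [Fintype ι]

/-- The perturbation `D(t) = Σ p_i (t_i² - 1) + r_i t_i³`. -/
def Df (p r : ι → ℝ) (t : ι → ℝ) : ℝ := ∑ i, qf (p i) (r i) (t i)

/-- The linear form `L(t) = Σ α_i t_i`. -/
def Lf (α : ι → ℝ) (t : ι → ℝ) : ℝ := ∑ i, α i * t i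

lemma continuous_Df (p r : ι → ℝ) : Continuous (Df p r) :=
  continuous_finsetSum _ fun i _ => (continuous_qf _ _).comp (continuous_apply i)

lemma continuous_Lf (α : ι → ℝ) : Continuous (Lf α) := by unfold Lf; fun_prop

/-- Second moment of a sum of independent centred variables. -/
lemma second_moment_pi (X : ι → ℝ → ℝ) (h : ∀ i, MemLp (X i) 2 (gaussianReal 0 1))
    (h0 : ∀ i, ∫ t, X i t ∂(gaussianReal 0 1) = 0) :
    MemLp (fun t : ι → ℝ => ∑ i, X i (t i)) 2 (gpi ι) ∧
    ∫ t, (∑ i, X i (t i)) ^ 2 ∂(gpi ι) = ∑ i, ∫ t, X i t ^ 2 ∂(gaussianReal 0 1) := by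
  have hm : ∀ i, MemLp (fun t : ι → ℝ => X i (t i)) 2 (gpi ι) := fun i =>
    (h i).comp_measurePreserving (measurePreserving_eval _ i)
  have hM : MemLp (fun t : ι → ℝ => ∑ i, X i (t i)) 2 (gpi ι) := memLp_finsetSum _ fun i _ => hm i
  refine ⟨hM, ?_⟩
  have hv := variance_sum_pi (μ := fun _ : ι => gaussianReal 0 1) h
  have hmean : ∫ t, ∑ i, X i (t i) ∂(gpi ι) = 0 := by
    rw [integral_finsetSum _ fun i _ => (hm i).integrable (by norm_num)]
    refine Finset.sum_eq_zero fun i _ => ?_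
    rw [← h0 i, integral_comp_eval (μ := fun _ : ι => gaussianReal 0 1) (f := X i)
      (h i).aestronglyMeasurable]
  have e : (∑ i, fun ω : ι → ℝ => X i (ω i)) = fun t => ∑ i, X i (t i) := by
    ext t; simp
  rw [e, variance_of_integral_eq_zero hM.aestronglyMeasurable.aemeasurable hmean] at hv
  rw [hv]
  exact Finset.sum_congr rfl fun i _ =>
    variance_of_integral_eq_zero (h i).aestronglyMeasurable.aemeasurable (h0 i)

lemma Df_moment (p r : ι → ℝ) : MemLp (Df p r) 2 (gpi ι) ∧
    ∫ t, Df p r t ^ 2 ∂(gpi ι) ≤ KG * ∑ i, (p i ^ 2 + r i ^ 2) := by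
  obtain ⟨h1, h2⟩ := second_moment_pi (fun i => qf (p i) (r i)) (fun i => memLp_qf _ _)
    (fun i => integral_qf _ _)
  refine ⟨h1, ?_⟩
  unfold Df
  rw [h2, Finset.mul_sum]
  exact Finset.sum_le_sum fun i _ => integral_qf_sq _ _

lemma Lf_moment (α : ι → ℝ) : MemLp (Lf α) 2 (gpi ι) ∧
    ∫ t, Lf α t ^ 2 ∂(gpi ι) = ∑ i, α i ^ 2 := by
  obtain ⟨h1, h2⟩ := second_moment_pi (fun i t => α i * t)
    (fun i => (memLp_id_gaussianReal' 2 (by simp)).const_mul (α i))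
    (fun i => by rw [integral_const_mul, integral_id_gaussianReal, mul_zero])
  refine ⟨h1, ?_⟩
  unfold Lf
  rw [h2]
  refine Finset.sum_congr rfl fun i _ => ?_
  simp_rw [mul_pow, integral_const_mul, integral_sq_gauss, mul_one]

/-- `R = √(D² + ε²)`. -/
def Rf (p r : ι → ℝ) (ε : ℝ) (t : ι → ℝ) : ℝ := √(Df p r t ^ 2 + ε ^ 2)

/-- The bump `Q = 1/(1 + (N/R)²)` with `N = m + L`; it is at least `1/2` where `|N| ≤ |D|`. -/
def Qf (α p r : ι → ℝ) (m ε : ℝ) (t : ι → ℝ) : ℝ :=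
  1 / (1 + ((m + Lf α t) / Rf p r ε t) ^ 2)

/-- `F = R arctan(N/R)` with `N = m + L`, a smooth truncation of `N` at level `R`. -/
def Ff (α p r : ι → ℝ) (m ε : ℝ) (t : ι → ℝ) : ℝ :=
  Rf p r ε t * Real.arctan ((m + Lf α t) / Rf p r ε t)

/-- The partial derivative of `F = R arctan(N/R)` with respect to `D`. -/
def Cf (α p r : ι → ℝ) (m ε : ℝ) (t : ι → ℝ) : ℝ :=
  (Real.arctan ((m + Lf α t) / Rf p r ε t) - (m + Lf α t) / Rf p r ε t * Qf α p r m ε t) *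
    (Df p r t / Rf p r ε t)

lemma hasDerivAt_coord_sum [DecidableEq ι] (g : ι → ℝ → ℝ) (i : ι) (t : ι → ℝ) {s g' : ℝ}
    (hg : HasDerivAt (g i) g' s) :
    HasDerivAt (fun s => ∑ j, g j (Function.update t i s j)) g' s := by
  have h : ∀ j ∈ Finset.univ, HasDerivAt (fun s => g j (Function.update t i s j))
      (if j = i then g' else 0) s := by
    intro j _
    by_cases hj : j = i
    · subst hj; simpa using hg
    · simpa [hj, Function.update_of_ne hj] using hasDerivAt_const s (g j (t j))
  simpa using HasDerivAt.fun_sum h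

lemma Rf_pos (p r : ι → ℝ) {ε : ℝ} (hε : 0 < ε) (t : ι → ℝ) : 0 < Rf p r ε t :=
  Real.sqrt_pos.2 (by positivity)

lemma abs_Df_le (p r : ι → ℝ) (ε : ℝ) (t : ι → ℝ) : |Df p r t| ≤ Rf p r ε t := by
  unfold Rf
  rw [← Real.sqrt_sq_eq_abs]
  exact Real.sqrt_le_sqrt (by nlinarith [sq_nonneg ε])

lemma continuous_Rf (p r : ι → ℝ) (ε : ℝ) : Continuous (Rf p r ε) := by
  have := continuous_Df p r
  unfold Rf; fun_prop

lemma continuous_ratio (α p r : ι → ℝ) (m : ℝ) {ε : ℝ} (hε : 0 < ε) :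
    Continuous fun t => (m + Lf α t) / Rf p r ε t :=
  (continuous_const.add (continuous_Lf α)).div (continuous_Rf p r ε)
    fun t => (Rf_pos p r hε t).ne'

lemma continuous_Qf (α p r : ι → ℝ) (m : ℝ) {ε : ℝ} (hε : 0 < ε) :
    Continuous (Qf α p r m ε) :=
  continuous_const.div (continuous_const.add ((continuous_ratio α p r m hε).pow 2))
    fun t => by positivity

lemma Qf_nonneg (α p r : ι → ℝ) (m ε : ℝ) (t : ι → ℝ) : 0 ≤ Qf α p r m ε t := by
  unfold Qf; positivity

lemma Qf_le_one (α p r : ι → ℝ) (m ε : ℝ) (t : ι → ℝ) : Qf α p r m ε t ≤ 1 := by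
  unfold Qf
  exact div_le_one_of_le₀ (by nlinarith [sq_nonneg ((m + Lf α t) / Rf p r ε t)]) (by positivity)

lemma integrable_Qf (α p r : ι → ℝ) (m : ℝ) {ε : ℝ} (hε : 0 < ε) :
    Integrable (Qf α p r m ε) (gpi ι) :=
  (integrable_const (1:ℝ)).mono' (continuous_Qf α p r m hε).aestronglyMeasurable
    (ae_of_all _ fun t => by
      rw [Real.norm_eq_abs, abs_of_nonneg (Qf_nonneg ..)]; exact Qf_le_one ..)

lemma Rf_moment (p r : ι → ℝ) (ε : ℝ) : MemLp (Rf p r ε) 2 (gpi ι) ∧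
    ∫ t, Rf p r ε t ^ 2 ∂(gpi ι) = ∫ t, Df p r t ^ 2 ∂(gpi ι) + ε ^ 2 := by
  have e : ∀ t, Rf p r ε t ^ 2 = Df p r t ^ 2 + ε ^ 2 := fun t => Real.sq_sqrt (by positivity)
  have hi := (Df_moment p r).1.integrable_sq
  constructor
  · rw [memLp_two_iff_integrable_sq (continuous_Rf p r ε).aestronglyMeasurable]
    simp_rw [e]
    exact hi.add (integrable_const _)
  · simp_rw [e]
    rw [integral_add hi (integrable_const _)]
    simp

lemma abs_arctan_le (x : ℝ) : |Real.arctan x| ≤ 2 := by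
  rw [abs_le]
  constructor <;> nlinarith [Real.neg_pi_div_two_lt_arctan x, Real.arctan_lt_pi_div_two x,
    Real.pi_lt_four]

lemma abs_Ff_le (α p r : ι → ℝ) (m : ℝ) {ε : ℝ} (hε : 0 < ε) (t : ι → ℝ) :
    |Ff α p r m ε t| ≤ 2 * Rf p r ε t := by
  have h := Rf_pos p r hε t
  unfold Ff
  rw [abs_mul, abs_of_pos h]
  nlinarith [abs_arctan_le ((m + Lf α t) / Rf p r ε t)]

lemma memLp_Ff (α p r : ι → ℝ) (m : ℝ) {ε : ℝ} (hε : 0 < ε) :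
    MemLp (Ff α p r m ε) 2 (gpi ι) := by
  refine ((Rf_moment p r ε).1.const_mul 2).mono
    ((continuous_Rf p r ε).mul
      (Real.continuous_arctan.comp (continuous_ratio α p r m hε))).aestronglyMeasurable
    (ae_of_all _ fun t => ?_)
  rw [Real.norm_eq_abs, Real.norm_eq_abs]
  exact (abs_Ff_le α p r m hε t).trans (le_abs_self _)

lemma continuous_Cf (α p r : ι → ℝ) (m : ℝ) {ε : ℝ} (hε : 0 < ε) :
    Continuous (Cf α p r m ε) :=
  ((Real.continuous_arctan.comp (continuous_ratio α p r m hε)).sub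
    ((continuous_ratio α p r m hε).mul (continuous_Qf α p r m hε))).mul
    ((continuous_Df p r).div (continuous_Rf p r ε) fun t => (Rf_pos p r hε t).ne')

lemma abs_Cf_le (α p r : ι → ℝ) (m : ℝ) {ε : ℝ} (hε : 0 < ε) (t : ι → ℝ) :
    |Cf α p r m ε t| ≤ 3 :=
  trunc_coef_le (Rf_pos p r hε t) (abs_Df_le p r ε t)

lemma integrable_coord_pow (i : ι) (n : ℕ) : Integrable (fun t : ι → ℝ => t i ^ n) (gpi ι) :=
  (measurePreserving_eval (fun _ : ι => gaussianReal 0 1) i).integrable_comp_of_integrable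
    (integrable_pow_gauss n)

lemma integral_coord_sq (i : ι) : ∫ t, t i ^ 2 ∂(gpi ι) = 1 := by
  rw [← integral_sq_gauss, integral_comp_eval (μ := fun _ : ι => gaussianReal 0 1)
    (f := fun x : ℝ => x ^ 2) (by fun_prop)]

/-- The contribution to `∂_i F` coming from `D`, whose `i`-th partial derivative is
`2 p_i t_i + 3 r_i t_i²`. -/
lemma integrable_CfD (α p r : ι → ℝ) (m : ℝ) {ε : ℝ} (hε : 0 < ε) (i : ι) :
    Integrable (fun t => Cf α p r m ε t * (2 * p i * t i + 3 * r i * t i ^ 2)) (gpi ι) ∧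
    |∫ t, Cf α p r m ε t * (2 * p i * t i + 3 * r i * t i ^ 2) ∂(gpi ι)| ≤
      3 * (2 * |p i| + 3 * |r i|) := by
  have hb : ∀ t : ι → ℝ, ‖Cf α p r m ε t * (2 * p i * t i + 3 * r i * t i ^ 2)‖ ≤
      3 * |p i| + (3 * |p i| + 9 * |r i|) * t i ^ 2 := by
    intro t
    rw [norm_mul, Real.norm_eq_abs, Real.norm_eq_abs]
    have h1 : |2 * p i * t i + 3 * r i * t i ^ 2| ≤ 2 * |p i| * |t i| + 3 * |r i| * t i ^ 2 := by
      refine (abs_add_le _ _).trans (le_of_eq ?_)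
      simp [abs_mul]
    have h2 : 2 * |t i| ≤ 1 + t i ^ 2 := by
      nlinarith [sq_nonneg (|t i| - 1), sq_abs (t i)]
    have h3 := abs_Cf_le α p r m hε t
    have h4 := abs_nonneg (p i)
    calc _ ≤ 3 * (2 * |p i| * |t i| + 3 * |r i| * t i ^ 2) :=
          mul_le_mul h3 h1 (abs_nonneg _) (by norm_num)
      _ ≤ _ := by nlinarith
  have hi : Integrable (fun t : ι → ℝ => 3 * |p i| + (3 * |p i| + 9 * |r i|) * t i ^ 2) (gpi ι) :=
    (integrable_const _).add ((integrable_coord_pow i 2).const_mul _)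
  refine ⟨hi.mono' (Continuous.aestronglyMeasurable ?_) (ae_of_all _ hb), ?_⟩
  · have := continuous_Cf α p r m hε
    fun_prop
  · refine (norm_integral_le_of_norm_le hi (ae_of_all _ hb)).trans (le_of_eq ?_)
    rw [integral_add (integrable_const _) ((integrable_coord_pow i 2).const_mul _),
      integral_const_mul (3 * |p i| + 9 * |r i|), integral_coord_sq]
    simp
    ring

lemma stein_Ff [DecidableEq ι] (α p r : ι → ℝ) (m : ℝ) {ε : ℝ} (hε : 0 < ε) (i : ι) :
    ∫ t, t i * Ff α p r m ε t ∂(gpi ι) = α i * ∫ t, Qf α p r m ε t ∂(gpi ι) +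
      ∫ t, Cf α p r m ε t * (2 * p i * t i + 3 * r i * t i ^ 2) ∂(gpi ι) := by
  have hF := memLp_Ff α p r m hε
  have ht : MemLp (fun t : ι → ℝ => t i) 2 (gpi ι) :=
    (memLp_id_gaussianReal' 2 (by simp)).comp_measurePreserving
      (measurePreserving_eval (fun _ : ι => gaussianReal 0 1) i)
  have hQ := (integrable_Qf α p r m hε).const_mul (α i)
  have hC := (integrable_CfD α p r m hε i).1
  rw [← integral_const_mul, ← integral_add hQ hC]
  refine stein_pi i (fun t s => ?_) (hF.integrable (by norm_num)) (ht.integrable_mul hF)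
    (hQ.add hC)
  have h1 : HasDerivAt (fun s => m + Lf α (Function.update t i s)) (α i) s := by
    have := hasDerivAt_coord_sum (fun j x => α j * x) i t
      ((hasDerivAt_id s).const_mul (α i))
    simpa [Lf] using this.const_add m
  have h2 : HasDerivAt (fun s => Df p r (Function.update t i s))
      (2 * p i * s + 3 * r i * s ^ 2) s := by
    refine hasDerivAt_coord_sum (fun j x => qf (p j) (r j) x) i t ?_
    have := ((((hasDerivAt_id s).pow 2).sub_const 1).const_mul (p i)).add
      (((hasDerivAt_id s).pow 3).const_mul (r i))
    refine this.congr_deriv ?_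
    simp
    ring
  simpa [Ff, Cf, Qf, Rf] using hasDerivAt_trunc hε h1 h2

/-- The concentration inequality: Stein's identity summed against the weights `α_i`. -/
lemma Qf_bound (α p r : ι → ℝ) (m : ℝ) {ε : ℝ} (hε : 0 < ε) :
    (∑ i, α i ^ 2) * ∫ t, Qf α p r m ε t ∂(gpi ι) ≤
      ε * ∑ i, α i ^ 2 + (KG * ∑ i, (p i ^ 2 + r i ^ 2) + ε ^ 2) / ε +
        ∑ i, |α i| * (3 * (2 * |p i| + 3 * |r i|)) := by
  classical
  have hF := memLp_Ff α p r m hε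
  have ht : ∀ i, Integrable (fun t : ι → ℝ => t i * Ff α p r m ε t) (gpi ι) := fun i =>
    ((memLp_id_gaussianReal' 2 (by simp)).comp_measurePreserving
      (measurePreserving_eval (fun _ : ι => gaussianReal 0 1) i)).integrable_mul hF
  have h1 : ∫ t, Lf α t * Ff α p r m ε t ∂(gpi ι) =
      (∑ i, α i ^ 2) * ∫ t, Qf α p r m ε t ∂(gpi ι) + ∑ i, α i *
        ∫ t, Cf α p r m ε t * (2 * p i * t i + 3 * r i * t i ^ 2) ∂(gpi ι) := by
    have e : ∀ t, Lf α t * Ff α p r m ε t = ∑ i, α i * (t i * Ff α p r m ε t) := fun t => by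
      unfold Lf; rw [Finset.sum_mul]; simp_rw [mul_assoc]
    simp_rw [e]
    rw [integral_finsetSum _ fun i _ => (ht i).const_mul _, Finset.sum_mul,
      ← Finset.sum_add_distrib]
    refine Finset.sum_congr rfl fun i _ => ?_
    rw [integral_const_mul, stein_Ff α p r m hε i]
    ring
  have h2 : ∫ t, Lf α t * Ff α p r m ε t ∂(gpi ι) ≤
      ε * ∑ i, α i ^ 2 + (KG * ∑ i, (p i ^ 2 + r i ^ 2) + ε ^ 2) / ε := by
    have hL := (Lf_moment α).1
    have hR := Rf_moment p r ε
    calc _ ≤ ∫ t, ε * Lf α t ^ 2 + ε⁻¹ * Rf p r ε t ^ 2 ∂(gpi ι) := by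
          refine integral_mono (hL.integrable_mul hF)
            ((hL.integrable_sq.const_mul _).add (hR.1.integrable_sq.const_mul _)) fun t => ?_
          have a1 : Lf α t * Ff α p r m ε t ≤ |Lf α t| * (2 * Rf p r ε t) := by
            refine (le_abs_self _).trans ?_
            rw [abs_mul]
            exact mul_le_mul_of_nonneg_left (abs_Ff_le α p r m hε t) (abs_nonneg _)
          have a2 : ε * Lf α t ^ 2 + ε⁻¹ * Rf p r ε t ^ 2 - |Lf α t| * (2 * Rf p r ε t)
              = ε⁻¹ * (ε * |Lf α t| - Rf p r ε t) ^ 2 := by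
            rw [← sq_abs (Lf α t)]; field_simp; ring
          have a3 : 0 ≤ ε⁻¹ * (ε * |Lf α t| - Rf p r ε t) ^ 2 := by positivity
          simp only
          linarith
      _ = ε * ∑ i, α i ^ 2 + (∫ t, Df p r t ^ 2 ∂(gpi ι) + ε ^ 2) / ε := by
          rw [integral_add (hL.integrable_sq.const_mul _) (hR.1.integrable_sq.const_mul _),
            integral_const_mul, integral_const_mul, (Lf_moment α).2, hR.2]
          ring
      _ ≤ _ := by
          have := (Df_moment p r).2
          gcongr
  have h3 : -∑ i, α i * ∫ t, Cf α p r m ε t * (2 * p i * t i + 3 * r i * t i ^ 2) ∂(gpi ι) ≤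
      ∑ i, |α i| * (3 * (2 * |p i| + 3 * |r i|)) := by
    refine (neg_le_abs _).trans ((Finset.abs_sum_le_sum_abs _ _).trans ?_)
    refine Finset.sum_le_sum fun i _ => ?_
    rw [abs_mul]
    exact mul_le_mul_of_nonneg_left (integrable_CfD α p r m hε i).2 (abs_nonneg _)
  linarith

lemma abs_Df_bound (p r : ι → ℝ) {ε : ℝ} (hε : 0 < ε) :
    ∫ t, |Df p r t| ∂(gpi ι) ≤ ε + (KG * ∑ i, (p i ^ 2 + r i ^ 2)) / ε := by
  have hD := Df_moment p r
  calc _ ≤ ∫ t, ε + ε⁻¹ * Df p r t ^ 2 ∂(gpi ι) := by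
        refine integral_mono (hD.1.integrable (by norm_num)).abs
          ((integrable_const _).add (hD.1.integrable_sq.const_mul _)) fun t => ?_
        have a2 : ε + ε⁻¹ * Df p r t ^ 2 - |Df p r t|
            = ε⁻¹ * ((ε - |Df p r t| / 2) ^ 2 + 3 / 4 * Df p r t ^ 2) := by
          rw [← sq_abs (Df p r t)]; field_simp; ring
        have a3 : 0 ≤ ε⁻¹ * ((ε - |Df p r t| / 2) ^ 2 + 3 / 4 * Df p r t ^ 2) := by positivity
        simp only
        linarith
    _ = ε + (∫ t, Df p r t ^ 2 ∂(gpi ι)) / ε := by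
        rw [integral_add (integrable_const _) (hD.1.integrable_sq.const_mul _),
          integral_const_mul]
        simp
        ring
    _ ≤ _ := by have := hD.2; gcongr

lemma min_exp_integral_bound (α p r : ι → ℝ) (m : ℝ) :
    |∫ t, min 1 (Real.exp (m + Lf α t)) ∂(gpi ι) -
      ∫ t, min 1 (Real.exp (m + Lf α t + Df p r t)) ∂(gpi ι)| ≤ ∫ t, |Df p r t| ∂(gpi ι) := by
  have hL := continuous_Lf α
  have hD := continuous_Df p r
  have hi : ∀ g : (ι → ℝ) → ℝ, Continuous g →
      Integrable (fun t => min 1 (Real.exp (g t))) (gpi ι) := fun g hg =>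
    (integrable_const (1:ℝ)).mono' (by fun_prop) (ae_of_all _ fun t => by
      rw [Real.norm_eq_abs, abs_of_nonneg (le_min zero_le_one (Real.exp_pos _).le)]
      exact min_le_left _ _)
  rw [← integral_sub (hi (fun t => m + Lf α t) (by fun_prop))
    (hi (fun t => m + Lf α t + Df p r t) (by fun_prop)), ← Real.norm_eq_abs]
  refine norm_integral_le_of_norm_le ((Df_moment p r).1.integrable (by norm_num)).abs
    (ae_of_all _ fun t => ?_)
  exact min_exp_sub_le _ _

lemma ind_exp_integral_bound (α p r : ι → ℝ) (m : ℝ) {ε : ℝ} (hε : 0 < ε) :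
    |∫ t, (Iio (0:ℝ)).indicator Real.exp (m + Lf α t) ∂(gpi ι) -
      ∫ t, (Iio (0:ℝ)).indicator Real.exp (m + Lf α t + Df p r t) ∂(gpi ι)| ≤
      ∫ t, |Df p r t| ∂(gpi ι) + 2 * ∫ t, Qf α p r m ε t ∂(gpi ι) := by
  have hL := continuous_Lf α
  have hD := continuous_Df p r
  have hi : ∀ g : (ι → ℝ) → ℝ, Continuous g →
      Integrable (fun t => (Iio (0:ℝ)).indicator Real.exp (g t)) (gpi ι) := fun g hg =>
    (integrable_const (1:ℝ)).mono'
      ((Real.measurable_exp.indicator measurableSet_Iio).comp hg.measurable).aestronglyMeasurable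
      (ae_of_all _ fun t => by
        by_cases h : g t < 0
        · rw [indicator_of_mem (mem_Iio.2 h), Real.norm_eq_abs, abs_of_pos (Real.exp_pos _)]
          exact Real.exp_le_one_iff.2 h.le
        · rw [indicator_of_notMem (by simpa using h)]; simp)
  have hA := ((Df_moment p r).1.integrable (by norm_num)).abs
  have hQ := (integrable_Qf α p r m hε).const_mul 2
  rw [← integral_sub (hi (fun t => m + Lf α t) (by fun_prop))
    (hi (fun t => m + Lf α t + Df p r t) (by fun_prop)), ← integral_const_mul,
    ← integral_add hA hQ, ← Real.norm_eq_abs]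
  refine norm_integral_le_of_norm_le (hA.add hQ) (ae_of_all _ fun t => ?_)
  exact indicator_exp_sub_le _ _ _ hε

end core

/-! ### The generators on the typical set -/

section assembly

/-- The vector `k v`, set to `0` outside `s`; it turns sums over `s` into sums over all indices. -/
def scaleOn {ι : Type*} [DecidableEq ι] (s : Finset ι) (k : ℝ) (v : ι → ℝ) (i : ι) : ℝ :=
  if i ∈ s then k * v i else 0

/-- The constant in `E|D| ≤ C1 d^{-1/2}`. -/
def C1 (l T : ℝ) : ℝ := 1 + KG * ((l ^ 4 + l ^ 6) * T)

/-- The constant in `κ E Q ≤ C2 d^{-1/2}`. -/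
def C2 (l T : ℝ) : ℝ := l ^ 2 * T + (KG * ((l ^ 4 + l ^ 6) * T) + 1) + (3 * l ^ 3 + 9 * l ^ 4) * T

/-- The bounds on `E|D|` and `E Q` with all parameters scaled, where `e` stands for `d^{-1/2}` and
`v`, `w`, `b` for the coefficients of the linear, quadratic and cubic terms. -/
lemma core_bound {ι : Type*} [Fintype ι] [DecidableEq ι] (s : Finset ι) (v w b : ι → ℝ)
    (m : ℝ) {e l T κ : ℝ} (he : 0 < e) (he1 : e ≤ 1) (hl : 0 < l)
    (hv : e ^ 2 * ∑ i ∈ s, v i ^ 2 ≤ T) (hw : e ^ 2 * ∑ i ∈ s, w i ^ 2 ≤ T)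
    (hb : e ^ 2 * ∑ i ∈ s, b i ^ 2 ≤ T) (hκ : κ ≤ l ^ 2 * (e ^ 2 * ∑ i ∈ s, v i ^ 2)) :
    ∫ t, |Df (scaleOn s ((l * e) ^ 2 / 2) w) (scaleOn s ((l * e) ^ 3) b) t| ∂(gpi ι)
      ≤ C1 l T * e ∧
    κ * ∫ t, Qf (scaleOn s (l * e) v) (scaleOn s ((l * e) ^ 2 / 2) w)
      (scaleOn s ((l * e) ^ 3) b) m e t ∂(gpi ι) ≤ C2 l T * e := by
  have hT : 0 ≤ T := le_trans (by positivity) hv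
  have e21 : e ^ 2 ≤ 1 := pow_le_one₀ he.le he1
  have hα : ∑ i, scaleOn s (l * e) v i ^ 2 = l ^ 2 * (e ^ 2 * ∑ i ∈ s, v i ^ 2) := by
    simp only [scaleOn, ite_pow, ne_eq, OfNat.ofNat_ne_zero, not_false_eq_true, zero_pow,
      Finset.sum_ite_mem, Finset.univ_inter, mul_pow, ← Finset.mul_sum, mul_assoc]
  have hpr : ∑ i, (scaleOn s ((l * e) ^ 2 / 2) w i ^ 2 + scaleOn s ((l * e) ^ 3) b i ^ 2) ≤
      (l ^ 4 + l ^ 6) * T * e ^ 2 := by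
    have : ∑ i, (scaleOn s ((l * e) ^ 2 / 2) w i ^ 2 + scaleOn s ((l * e) ^ 3) b i ^ 2) =
        l ^ 4 * e ^ 2 / 4 * (e ^ 2 * ∑ i ∈ s, w i ^ 2) +
        l ^ 6 * e ^ 2 * e ^ 2 * (e ^ 2 * ∑ i ∈ s, b i ^ 2) := by
      rw [Finset.sum_add_distrib]
      simp only [scaleOn, ite_pow, ne_eq, OfNat.ofNat_ne_zero, not_false_eq_true, zero_pow,
        Finset.sum_ite_mem, Finset.univ_inter, mul_pow, ← Finset.mul_sum]
      ring
    rw [this]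
    calc _ ≤ l ^ 4 * e ^ 2 * T + l ^ 6 * e ^ 2 * 1 * T := by
          gcongr
          exact div_le_self (by positivity) (by norm_num)
      _ = _ := by ring
  have hc : ∑ i, |scaleOn s (l * e) v i| * (3 * (2 * |scaleOn s ((l * e) ^ 2 / 2) w i| +
      3 * |scaleOn s ((l * e) ^ 3) b i|)) ≤ (3 * l ^ 3 + 9 * l ^ 4) * T * e := by
    have : ∀ i, |scaleOn s (l * e) v i| * (3 * (2 * |scaleOn s ((l * e) ^ 2 / 2) w i| +
        3 * |scaleOn s ((l * e) ^ 3) b i|)) =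
        if i ∈ s then 3 * (l * e) ^ 3 * (|v i| * |w i|) + 9 * (l * e) ^ 4 * (|v i| * |b i|)
          else 0 := by
      intro i
      unfold scaleOn
      split_ifs
      · rw [abs_mul (l * e), abs_mul ((l * e) ^ 2 / 2), abs_mul ((l * e) ^ 3),
          abs_of_pos (by positivity : 0 < l * e),
          abs_of_pos (by positivity : 0 < (l * e) ^ 2 / 2),
          abs_of_pos (by positivity : 0 < (l * e) ^ 3)]
        ring
      · simp
    simp_rw [this, Finset.sum_ite_mem, Finset.univ_inter]
    have am : ∀ u : ι → ℝ, e ^ 2 * ∑ i ∈ s, u i ^ 2 ≤ T →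
        e ^ 2 * ∑ i ∈ s, |v i| * |u i| ≤ T := by
      intro u hu
      have : ∑ i ∈ s, |v i| * |u i| ≤ (∑ i ∈ s, v i ^ 2 + ∑ i ∈ s, u i ^ 2) / 2 := by
        rw [← Finset.sum_add_distrib, Finset.sum_div]
        refine Finset.sum_le_sum fun i _ => ?_
        nlinarith [sq_nonneg (|v i| - |u i|), sq_abs (v i), sq_abs (u i)]
      calc _ ≤ e ^ 2 * ((∑ i ∈ s, v i ^ 2 + ∑ i ∈ s, u i ^ 2) / 2) := by gcongr
        _ ≤ T := by linarith
    rw [Finset.sum_add_distrib, ← Finset.mul_sum, ← Finset.mul_sum]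
    have h1 := am w hw
    have h2 := am b hb
    calc _ = 3 * l ^ 3 * e * (e ^ 2 * ∑ i ∈ s, |v i| * |w i|) +
          9 * l ^ 4 * (e * e) * (e ^ 2 * ∑ i ∈ s, |v i| * |b i|) := by ring
      _ ≤ 3 * l ^ 3 * e * T + 9 * l ^ 4 * (1 * e) * T := by gcongr
      _ = _ := by ring
  have hK := KG_nonneg
  constructor
  · refine (abs_Df_bound _ _ he).trans ?_
    calc _ ≤ e + (KG * ((l ^ 4 + l ^ 6) * T * e ^ 2)) / e := by gcongr
      _ = _ := by unfold C1; field_simp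
  · have hQ := Qf_bound (scaleOn s (l * e) v) (scaleOn s ((l * e) ^ 2 / 2) w)
      (scaleOn s ((l * e) ^ 3) b) m he
    have hQ0 : 0 ≤ ∫ t, Qf (scaleOn s (l * e) v) (scaleOn s ((l * e) ^ 2 / 2) w)
      (scaleOn s ((l * e) ^ 3) b) m e t ∂(gpi ι) := integral_nonneg fun t => Qf_nonneg ..
    rw [hα] at hQ
    refine (mul_le_mul_of_nonneg_right hκ hQ0).trans (hQ.trans ?_)
    calc _ ≤ e * (l ^ 2 * T) + (KG * ((l ^ 4 + l ^ 6) * T * e ^ 2) + e ^ 2) / e +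
          (3 * l ^ 3 + 9 * l ^ 4) * T * e := by gcongr
      _ = _ := by unfold C2; field_simp

/-- The proposal law is the image of the standard Gaussian under `t ↦ x + (l/√d) t`. -/
lemma gaussPi_integral (l : ℝ) (d : ℕ) (x : Fin d → ℝ) (g : (Fin d → ℝ) → ℝ)
    (hg : Measurable g) :
    ∫ Y, g Y ∂(gaussPi l d x) =
      ∫ t, g (fun i => x i + l * (1 / √(d:ℝ)) * t i) ∂(gpi (Fin d)) := by
  have h : ∀ i : Fin d, MeasurePreserving (fun t : ℝ => x i + l * (1 / √(d:ℝ)) * t)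
      (gaussianReal 0 1) (gaussianReal (x i) ((l ^ 2 / (d:ℝ)).toNNReal)) := by
    intro i
    refine ⟨by fun_prop, ?_⟩
    have h1 := gaussianReal_map_const_mul (μ := 0) (v := 1) (l * (1 / √(d:ℝ)))
    rw [show (fun t : ℝ => x i + l * (1 / √(d:ℝ)) * t) =
      (fun u => x i + u) ∘ (fun t => l * (1 / √(d:ℝ)) * t) from rfl,
      ← Measure.map_map (by fun_prop) (by fun_prop), h1]
    rw [mul_zero, gaussianReal_map_const_add, zero_add]
    congr 1
    ext
    rw [Real.coe_toNNReal _ (by positivity)]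
    simp [mul_pow, div_eq_mul_inv]
  have hp := measurePreserving_pi (fun _ : Fin d => gaussianReal 0 1)
    (fun i => gaussianReal (x i) ((l ^ 2 / (d:ℝ)).toNNReal)) h
  rw [gaussPi, ← hp.map_eq, integral_map hp.measurable.aemeasurable
    hg.aestronglyMeasurable]

lemma Nf_eq (ρ : ℝ → ℝ) (l : ℝ) (d : ℕ) [NeZero d] (x t : Fin d → ℝ) :
    Nf ρ l d x (fun i => x i + l * (1 / √(d:ℝ)) * t i) =
      l ^ 2 / (2 * (d:ℝ)) * ∑ i ∈ restIdx d, d2l ρ (x i) +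
      Lf (scaleOn (restIdx d) (l * (1 / √(d:ℝ))) fun i => dl ρ (x i)) t := by
  unfold Nf Lf scaleOn
  simp only [ite_mul, zero_mul, Finset.sum_ite_mem, Finset.univ_inter]
  congr 1
  exact Finset.sum_congr rfl fun i _ => by ring

lemma SK_eq (ρ : ℝ → ℝ) (c l : ℝ) (d : ℕ) [NeZero d] (x t : Fin d → ℝ) :
    SK ρ c d x (fun i => x i + l * (1 / √(d:ℝ)) * t i) =
      l ^ 2 / (2 * (d:ℝ)) * ∑ i ∈ restIdx d, d2l ρ (x i) +
      Lf (scaleOn (restIdx d) (l * (1 / √(d:ℝ))) fun i => dl ρ (x i)) t +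
      Df (scaleOn (restIdx d) ((l * (1 / √(d:ℝ))) ^ 2 / 2) fun i => d2l ρ (x i))
        (scaleOn (restIdx d) ((l * (1 / √(d:ℝ))) ^ 3) fun i =>
          (dl ρ (x i)) ^ 3 * (Aset ρ c).indicator (fun _ => (1:ℝ)) (x i) / 3) t := by
  have hd : (d:ℝ) ≠ 0 := Nat.cast_ne_zero.2 (NeZero.ne d)
  have hσ : (l * (1 / √(d:ℝ))) ^ 2 = l ^ 2 / d := by
    rw [mul_pow, div_pow, Real.sq_sqrt (by positivity)]; ring
  have hD : ∀ (p r : Fin d → ℝ) (k j : ℝ), Df (scaleOn (restIdx d) k p)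
      (scaleOn (restIdx d) j r) t = ∑ i ∈ restIdx d, qf (k * p i) (j * r i) (t i) := by
    intro p r k j
    have : ∀ i, qf (scaleOn (restIdx d) k p i) (scaleOn (restIdx d) j r i) (t i) =
        if i ∈ restIdx d then qf (k * p i) (j * r i) (t i) else 0 := by
      intro i; unfold scaleOn; split_ifs <;> simp [qf]
    unfold Df
    simp_rw [this, Finset.sum_ite_mem, Finset.univ_inter]
  rw [hD]
  unfold SK Lf scaleOn
  simp only [ite_mul, zero_mul, Finset.sum_ite_mem, Finset.univ_inter]
  rw [Finset.mul_sum, ← Finset.sum_add_distrib, ← Finset.sum_add_distrib]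
  refine Finset.sum_congr rfl fun i _ => ?_
  have h2 : l ^ 2 / (2 * (d:ℝ)) = (l * (1 / √(d:ℝ))) ^ 2 / 2 := by rw [hσ]; field_simp
  rw [h2]
  unfold Kf qf
  ring

lemma MemS.exists_bound {n : ℕ} {g : ℝ → ℝ} (hg : MemS n g) {i : ℕ} (hi : i ≤ n) :
    ∃ B, 0 ≤ B ∧ ∀ x, |iteratedDeriv i g x| ≤ B * Real.exp (|x| / 2) := by
  obtain ⟨B, hB⟩ := hg.2 (1/2) (by norm_num) i hi
  have h : ∀ x, |iteratedDeriv i g x| ≤ B * Real.exp (|x| / 2) := by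
    intro x
    have := hB ⟨x, rfl⟩
    simp only at this
    rw [Real.exp_neg, inv_mul_le_iff₀ (Real.exp_pos _)] at this
    rw [mul_comm, show |x| / 2 = 1 / 2 * |x| by ring]
    exact this
  exact ⟨B, by have := (abs_nonneg _).trans (h 0); simpa using this, h⟩

lemma abs_le_normIS {n : ℕ} {g : ℝ → ℝ} (hg : MemS n g) {i : ℕ} (hi : i ≤ n) (x : ℝ) :
    |iteratedDeriv i g x| ≤ normIS (iteratedDeriv i g) (1/2) * Real.exp (|x| / 2) := by
  have := le_ciSup (hg.2 (1/2) (by norm_num) i hi) x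
  rw [Real.exp_neg, inv_mul_le_iff₀ (Real.exp_pos _)] at this
  rw [mul_comm, show |x| / 2 = 1 / 2 * |x| by ring]
  exact this

/-- For `d = 1` the second defining condition compares with `1/(d-1) = 1/0 = 0`, so it fails. -/
lemma Ad_two_le {ρ : ℝ → ℝ} {c : ℝ} {a : ℕ → ℝ} {d : ℕ} [NeZero d]
    (hA : 0 < ∫ x in Aset ρ c, ρ x) {x : Fin d → ℝ} (hx : x ∈ Ad ρ c a d) : 2 ≤ d := by
  by_contra h
  have h0 := NeZero.ne d
  have h1 : d = 1 := by omega
  have := hx.2.1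
  subst h1
  simp at this
  linarith

lemma cubic_coef_le (ρ : ℝ → ℝ) {c : ℝ} (hc : 0 < c) (x : ℝ) :
    |(dl ρ x) ^ 3 * (Aset ρ c).indicator (fun _ => (1:ℝ)) x / 3| ≤ c ^ 3 * Real.exp (|x| / 2) := by
  have he : 1 ≤ Real.exp (|x| / 2) := Real.one_le_exp (by positivity)
  by_cases h : x ∈ Aset ρ c
  · rw [indicator_of_mem h, mul_one, abs_div, abs_pow]
    have h1 : |dl ρ x| ^ 3 ≤ c ^ 3 := pow_le_pow_left₀ (abs_nonneg _) h.2.2.le 3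
    have : |(3:ℝ)| = 3 := by norm_num
    rw [this]
    have : 0 ≤ |dl ρ x| ^ 3 := by positivity
    have : 0 < c ^ 3 := by positivity
    nlinarith
  · rw [indicator_of_notMem h]; simp; positivity

lemma sum_sq_le {ρ : ℝ → ℝ} {c : ℝ} {a : ℕ → ℝ} {d : ℕ} (hd : 2 ≤ d) {x : Fin d → ℝ}
    (hx : x ∈ Ad ρ c a d) {B : ℝ} {g : ℝ → ℝ}
    (hg : ∀ y, |g y| ≤ B * Real.exp (|y| / 2)) :
    (1 / √(d:ℝ)) ^ 2 * ∑ i ∈ restIdx d, g (x i) ^ 2 ≤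
      B ^ 2 * (2 * |rhoE ρ (fun t => Real.exp |t|)|) := by
  have hd' : (2:ℝ) ≤ d := by exact_mod_cast hd
  have h1 := hx.1
  rw [one_div_mul_eq_div, div_lt_iff₀ (by linarith)] at h1
  have h2 : ∑ i ∈ restIdx d, g (x i) ^ 2 ≤ B ^ 2 * ∑ i ∈ restIdx d, Real.exp |x i| := by
    rw [Finset.mul_sum]
    refine Finset.sum_le_sum fun i _ => ?_
    have := pow_le_pow_left₀ (abs_nonneg _) (hg (x i)) 2
    rw [sq_abs, mul_pow, ← Real.exp_nat_mul] at this
    convert this using 3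
    push_cast; ring
  rw [div_pow, one_pow, Real.sq_sqrt (by positivity), one_div_mul_eq_div,
    div_le_iff₀ (by linarith)]
  refine h2.trans ?_
  rw [mul_assoc]
  refine mul_le_mul_of_nonneg_left ?_ (sq_nonneg B)
  set M := rhoE ρ fun t => Real.exp |t|
  calc _ ≤ 2 * M * ((d:ℝ) - 1) := h1.le
    _ ≤ 2 * |M| * ((d:ℝ) - 1) := by
        have := le_abs_self M
        have : 0 ≤ (d:ℝ) - 1 := by linarith
        gcongr
    _ ≤ 2 * |M| * d := by
        have := abs_nonneg M
        nlinarith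

lemma sum_sq_ge {ρ : ℝ → ℝ} {c : ℝ} (hc : 0 < c) {a : ℕ → ℝ} {d : ℕ} (hd : 2 ≤ d)
    (hA : 0 < ∫ x in Aset ρ c, ρ x) {x : Fin d → ℝ} (hx : x ∈ Ad ρ c a d) :
    (∫ x in Aset ρ c, ρ x) / (4 * c ^ 2) ≤
      (1 / √(d:ℝ)) ^ 2 * ∑ i ∈ restIdx d, dl ρ (x i) ^ 2 := by
  have hd' : (2:ℝ) ≤ d := by exact_mod_cast hd
  have h1 := hx.2.1
  rw [one_div_mul_eq_div, lt_div_iff₀ (by linarith)] at h1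
  have h2 : (∑ i ∈ restIdx d, (Aset ρ c).indicator (fun _ => (1:ℝ)) (x i)) / c ^ 2 ≤
      ∑ i ∈ restIdx d, dl ρ (x i) ^ 2 := by
    rw [Finset.sum_div]
    refine Finset.sum_le_sum fun i _ => ?_
    by_cases h : x i ∈ Aset ρ c
    · rw [indicator_of_mem h, ← sq_abs (dl ρ (x i)), ← one_div_pow]
      exact pow_le_pow_left₀ (by positivity) h.2.1.le 2
    · rw [indicator_of_notMem h]; simp; positivity
  rw [div_pow, one_pow, Real.sq_sqrt (by positivity), one_div_mul_eq_div,
    le_div_iff₀ (by linarith)]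
  refine le_trans ?_ h2
  rw [div_mul_eq_mul_div, div_le_div_iff₀ (by positivity) (by positivity)]
  set P := ∫ x in Aset ρ c, ρ x
  have h3 : P * d ≤ 4 * ∑ i ∈ restIdx d, (Aset ρ c).indicator (fun _ => (1:ℝ)) (x i) := by
    nlinarith
  nlinarith [sq_pos_of_pos hc]

end assembly

/-- **Proposition.** There is a constant `C` with
`|Ğ_d f(x) - Ĝ_d f(x)| ≤ C (Σ_{i=1}^2 ‖f⁽ⁱ⁾‖_{∞,1/2}) e^{|x₁|} d^{-1/2}` for every `f ∈ S³`,
all `d ∈ ℕ` and every `x ∈ 𝒜_d`. -/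
theorem stmt7 (ρ : ℝ → ℝ) (hmeas : Measurable ρ) (hpos : ∀ x, 0 < ρ x)
    (hint : ∫ x, ρ x = 1) (hlog : MemS 4 fun x => Real.log (ρ x))
    (htail : SuperExpTails ρ) (l : ℝ) (hl : 0 < l)
    (c : ℝ) (hc : 0 < c) (hA : 0 < ∫ x in Aset ρ c, ρ x)
    (a : ℕ → ℝ) (ha : Sluggish a) :
    ∃ C : ℝ, ∀ (d : ℕ) [NeZero d], ∀ f : ℝ → ℝ, MemS 3 f → ∀ x ∈ Ad ρ c a d,
      |bGd ρ l d f x - hGd ρ c l d f x| ≤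
        C * (∑ i ∈ Finset.Icc 1 2, normIS (iteratedDeriv i f) (1/2)) *
          Real.exp |x 0| / Real.sqrt d := by
  obtain ⟨B1, hB1, hb1⟩ := hlog.exists_bound (i := 1) (by norm_num)
  obtain ⟨B2, hB2, hb2⟩ := hlog.exists_bound (i := 2) (by norm_num)
  have hb1' : ∀ y, |dl ρ y| ≤ B1 * Real.exp (|y| / 2) := by
    simpa [dl, iteratedDeriv_one] using hb1
  have hb2' : ∀ y, |d2l ρ y| ≤ B2 * Real.exp (|y| / 2) := by
    simpa [d2l, dl, iteratedDeriv_succ, iteratedDeriv_one] using hb2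
  set B := B1 + B2 + c ^ 3 with hBdef
  have hc3 : 0 < c ^ 3 := by positivity
  have mono : ∀ {B'} {g : ℝ → ℝ}, B' ≤ B → (∀ y, |g y| ≤ B' * Real.exp (|y| / 2)) →
      ∀ y, |g y| ≤ B * Real.exp (|y| / 2) := fun hB' hg y =>
    (hg y).trans (mul_le_mul_of_nonneg_right hB' (Real.exp_pos _).le)
  have hv := mono (by linarith) hb1'
  have hw := mono (by linarith) hb2'
  have hb := mono (by linarith) (cubic_coef_le ρ hc)
  have hB0 : 0 ≤ B := by linarith
  set T := B ^ 2 * (2 * |rhoE ρ (fun t => Real.exp |t|)|) with hT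
  set κ := l ^ 2 * ((∫ x in Aset ρ c, ρ x) / (4 * c ^ 2)) with hκ
  have hκ0 : 0 < κ := by positivity
  have hT0 : 0 ≤ T := by positivity
  have hK := KG_nonneg
  have hC1 : 0 ≤ C1 l T := by unfold C1; positivity
  have hC2 : 0 ≤ C2 l T := by unfold C2; positivity
  refine ⟨l ^ 2 * C1 l T + l ^ 2 * B * (C1 l T + 2 * (C2 l T / κ)), ?_⟩
  intro d _ f hf x hx
  have hd := Ad_two_le hA hx
  have hd' : (2:ℝ) ≤ d := by exact_mod_cast hd
  have hsd : 0 < √(d:ℝ) := Real.sqrt_pos.2 (by linarith)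
  have he : 0 < 1 / √(d:ℝ) := by positivity
  have he1 : 1 / √(d:ℝ) ≤ 1 := by
    rw [div_le_one hsd]; exact Real.one_le_sqrt.2 (by linarith)
  set m := l ^ 2 / (2 * (d:ℝ)) * ∑ i ∈ restIdx d, d2l ρ (x i)
  set α := scaleOn (restIdx d) (l * (1 / √(d:ℝ))) fun i => dl ρ (x i)
  set p := scaleOn (restIdx d) ((l * (1 / √(d:ℝ))) ^ 2 / 2) fun i => d2l ρ (x i)
  set r := scaleOn (restIdx d) ((l * (1 / √(d:ℝ))) ^ 3) fun i =>
          (dl ρ (x i)) ^ 3 * (Aset ρ c).indicator (fun _ => (1:ℝ)) (x i) / 3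
  have hcore : ∫ t, |Df p r t| ∂(gpi (Fin d)) ≤ C1 l T * (1 / √(d:ℝ)) ∧
      κ * ∫ t, Qf α p r m (1 / √(d:ℝ)) t ∂(gpi (Fin d)) ≤ C2 l T * (1 / √(d:ℝ)) :=
    core_bound (restIdx d) (fun i => dl ρ (x i)) (fun i => d2l ρ (x i))
      (fun i => (dl ρ (x i)) ^ 3 * (Aset ρ c).indicator (fun _ => (1:ℝ)) (x i) / 3) m he he1 hl
      (sum_sq_le hd hx hv) (sum_sq_le hd hx hw) (sum_sq_le hd hx hb)
      (mul_le_mul_of_nonneg_left (sum_sq_ge hc hd hA hx) (sq_nonneg l))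
  have hQ : ∫ t, Qf α p r m (1 / √(d:ℝ)) t ∂(gpi (Fin d)) ≤ C2 l T / κ * (1 / √(d:ℝ)) := by
    rw [div_mul_eq_mul_div, le_div_iff₀ hκ0, mul_comm]; exact hcore.2
  have mN : Measurable (Nf ρ l d x) := by unfold Nf; fun_prop
  have mS : Measurable (SK ρ c d x) := by unfold SK Kf; fun_prop
  have mI : Measurable ((Iio (0:ℝ)).indicator Real.exp) :=
    Real.measurable_exp.indicator measurableSet_Iio
  have hmin : |∫ Y, min 1 (Real.exp (Nf ρ l d x Y)) ∂(gaussPi l d x) -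
      ∫ Y, min 1 (Real.exp (SK ρ c d x Y)) ∂(gaussPi l d x)| ≤ C1 l T * (1 / √(d:ℝ)) := by
    rw [gaussPi_integral l d x _ (by fun_prop), gaussPi_integral l d x _ (by fun_prop)]
    simp_rw [Nf_eq, SK_eq]
    exact (min_exp_integral_bound α p r m).trans hcore.1
  have hind : |∫ Y, (Iio (0:ℝ)).indicator Real.exp (Nf ρ l d x Y) ∂(gaussPi l d x) -
      ∫ Y, (Iio (0:ℝ)).indicator Real.exp (SK ρ c d x Y) ∂(gaussPi l d x)| ≤
      (C1 l T + 2 * (C2 l T / κ)) * (1 / √(d:ℝ)) := by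
    rw [gaussPi_integral l d x (fun Y => (Iio (0:ℝ)).indicator Real.exp (Nf ρ l d x Y)) (mI.comp mN),
      gaussPi_integral l d x (fun Y => (Iio (0:ℝ)).indicator Real.exp (SK ρ c d x Y)) (mI.comp mS)]
    simp_rw [Nf_eq, SK_eq]
    refine (ind_exp_integral_bound α p r m he).trans ?_
    linarith [hcore.1]
  have hsum : ∑ i ∈ Finset.Icc 1 2, normIS (iteratedDeriv i f) (1/2) =
      normIS (iteratedDeriv 1 f) (1/2) + normIS (iteratedDeriv 2 f) (1/2) := by
    simp [Finset.sum_Icc_succ_top]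
  have hf1 := abs_le_normIS hf (i := 1) (by norm_num) (x 0)
  have hf2 := abs_le_normIS hf (i := 2) (by norm_num) (x 0)
  have hn1 := normIS_nonneg (iteratedDeriv 1 f) (1/2)
  have hn2 := normIS_nonneg (iteratedDeriv 2 f) (1/2)
  rw [hsum]
  generalize normIS (iteratedDeriv 1 f) (1/2) = n1 at *
  generalize normIS (iteratedDeriv 2 f) (1/2) = n2 at *
  rw [iteratedDeriv_one] at hf1
  rw [iteratedDeriv_succ, iteratedDeriv_one] at hf2
  have hexp : Real.exp (|x 0| / 2) * Real.exp (|x 0| / 2) = Real.exp |x 0| := by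
    rw [← Real.exp_add]; congr 1; ring
  have hexp1 : Real.exp (|x 0| / 2) ≤ Real.exp |x 0| :=
    Real.exp_le_exp.2 (by linarith [abs_nonneg (x 0)])
  have h1 : |deriv f (x 0)| * |dl ρ (x 0)| ≤ n1 * B * Real.exp |x 0| := by
    calc _ ≤ (n1 * Real.exp (|x 0| / 2)) * (B * Real.exp (|x 0| / 2)) :=
          mul_le_mul hf1 (hv _) (abs_nonneg _) (by positivity)
      _ = _ := by rw [← hexp]; ring
  have h2 : |deriv (deriv f) (x 0)| ≤ n2 * Real.exp |x 0| :=
    hf2.trans (mul_le_mul_of_nonneg_left hexp1 hn2)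
  unfold bGd hGd
  generalize (∫ Y, min 1 (Real.exp (Nf ρ l d x Y)) ∂(gaussPi l d x)) = I1 at *
  generalize (∫ Y, min 1 (Real.exp (SK ρ c d x Y)) ∂(gaussPi l d x)) = I2 at *
  generalize (∫ Y, (Iio (0:ℝ)).indicator Real.exp (Nf ρ l d x Y) ∂(gaussPi l d x)) = I3 at *
  generalize (∫ Y, (Iio (0:ℝ)).indicator Real.exp (SK ρ c d x Y) ∂(gaussPi l d x)) = I4 at *
  have hCQ : 0 ≤ C1 l T + 2 * (C2 l T / κ) := by positivity
  generalize C1 l T + 2 * (C2 l T / κ) = C3 at *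
  calc _ = |l ^ 2 / 2 * (deriv (deriv f) (x 0) * (I1 - I2)) +
        l ^ 2 * ((deriv f (x 0) * dl ρ (x 0)) * (I3 - I4))| := by ring_nf
    _ ≤ l ^ 2 / 2 * (|deriv (deriv f) (x 0)| * |I1 - I2|) +
        l ^ 2 * ((|deriv f (x 0)| * |dl ρ (x 0)|) * |I3 - I4|) := by
        refine (abs_add_le _ _).trans (le_of_eq ?_)
        simp only [abs_mul, abs_div, abs_pow, abs_of_pos hl]
        norm_num
    _ ≤ l ^ 2 / 2 * ((n2 * Real.exp |x 0|) * (C1 l T * (1 / √(d:ℝ)))) +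
        l ^ 2 * ((n1 * B * Real.exp |x 0|) * (C3 * (1 / √(d:ℝ)))) := by gcongr
    _ ≤ l ^ 2 * (((n1 + n2) * Real.exp |x 0|) * (C1 l T * (1 / √(d:ℝ)))) +
        l ^ 2 * (((n1 + n2) * B * Real.exp |x 0|) * (C3 * (1 / √(d:ℝ)))) := by
        gcongr
        · exact half_le_self (by positivity)
        · linarith
        · linarith
    _ = _ := by ring
end
end
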